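/- arXiv:2304.06432 — 9 statements merged into one kernel-verified Lean document; each statement's English description precedes it below -/
import Mathlib

section
/- Let k be a field of characteristic zero and X = {1, 2, …, M} with 1 ≺ 2 ≺ ⋯ ≺ M. Then in the free algebra k⟨X⟩, for all natural numbers i₁, …, i_M: SH_{i_M,…,i₁} = Σ ((i₁+⋯+i_M)! / (t₁!⋯tₙ!)) · ∏_{m=1}^{n} (C(α_m)·E(α_m) / |α_m|!)^{t_m}, where the sum is over all n ≥ 0, all strictly decreasing tuples α₁ ≻ α₂ ≻ ⋯ ≻ αₙ of Lyndon words over X, and all tuples of positive integers (t₁, …, tₙ) such that Σ_{m=1}^{n} t_m·α_m(x) = i_x for every letter x ∈ X, the product being taken in this decreasing order of the α_m. -/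
/-- A nonempty word over a linearly ordered alphabet is a Lyndon word if it is
strictly lexicographically smaller than every nontrivial rotation of itself
(vacuously true for single letters). -/
def IsLyndon {X : Type*} [LinearOrder X] (w : List X) : Prop :=
  w ≠ [] ∧ ∀ u v : List X, u ≠ [] → v ≠ [] → w = u ++ v → List.Lex (· < ·) w (v ++ u)

set_option linter.unusedSectionVars false
namespace LyndonAux

section Words
variable {X : Type*} [LinearOrder X]

theorem app_lt_app (p a b : List X) : p ++ a < p ++ b ↔ a < b := by
  induction p with
  | nil => simp
  | cons x p ih => simp [ih]

theorem le_app (a b : List X) : a ≤ a ++ b := by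
  refine not_lt.1 fun h => ?_
  have : a ++ b < a ++ [] := by simpa using h
  rw [app_lt_app] at this
  simp at this

theorem lt_app_of_not_prefix : ∀ (a b : List X), a < b → ¬ a <+: b → ∀ c d, a ++ c < b ++ d
  | [], b, _, h2, _, _ => absurd (List.nil_prefix) h2
  | x :: a, [], h, _, _, _ => absurd h (by simp)
  | x :: a, y :: b, h, h2, c, d => by
    rw [List.cons_lt_cons_iff] at h
    rw [List.cons_append, List.cons_append, List.cons_lt_cons_iff]
    rcases h with h | ⟨rfl, h⟩
    · exact Or.inl h
    · refine Or.inr ⟨rfl, lt_app_of_not_prefix a b h (fun h3 => h2 ?_) c d⟩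
      simpa using h3

theorem lt_app_of_length (a b : List X) (h : a < b) (hl : b.length ≤ a.length) (c d : List X) :
    a ++ c < b ++ d := by
  apply lt_app_of_not_prefix a b h
  intro hp
  exact h.ne (hp.eq_of_length (le_antisymm hp.length_le hl))

theorem IsLyndon.lt_suffix {w : List X} (hw : IsLyndon w) (u v : List X) (hu : u ≠ [])
    (hv : v ≠ []) (h : w = u ++ v) : w < v := by
  by_contra hc
  have hul : 0 < u.length := List.length_pos_iff.2 hu
  have hlt : v < w := by
    rcases lt_or_eq_of_le (not_lt.1 hc) with h1 | h1
    · exact h1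
    · have := congrArg List.length h
      rw [← h1, List.length_append] at this
      omega
  have h1 : w < v ++ u := hw.2 u v hu hv h
  by_cases hp : v <+: w
  · obtain ⟨s, hs⟩ := hp
    rw [← hs, app_lt_app] at h1
    have hsl : s.length = u.length := by
      have := congrArg List.length (hs.trans h)
      simp only [List.length_append] at this
      omega
    have hs0 : s ≠ [] := by
      rintro rfl
      simp at hsl; omega
    have h2 : w < s ++ v := hw.2 v s hv hs0 hs.symm
    have h3 := lt_app_of_length s u h1 hsl.ge v v
    rw [← h] at h3
    exact lt_asymm h2 h3
  · have := lt_app_of_not_prefix v w hlt hp u []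
    rw [List.append_nil] at this
    exact lt_asymm h1 this

theorem isLyndon_of {w : List X} (hw : w ≠ [])
    (h : ∀ u v, u ≠ [] → v ≠ [] → w = u ++ v → w < v) : IsLyndon w :=
  ⟨hw, fun u v hu hv e => (lt_of_lt_of_le (h u v hu hv e) (le_app v u) : w < v ++ u)⟩

theorem isLyndon_singleton (x : X) : IsLyndon [x] := by
  refine ⟨by simp, fun u v hu hv h => ?_⟩
  have := congrArg List.length h
  have h1 := List.length_pos_iff.2 hu
  have h2 := List.length_pos_iff.2 hv
  simp at this
  omega

theorem IsLyndon.append {a b : List X} (ha : IsLyndon a) (hb : IsLyndon b) (hab : a < b) :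
    IsLyndon (a ++ b) := by
  have key : a ++ b < b := by
    by_cases hp : a <+: b
    · obtain ⟨s, rfl⟩ := hp
      have hs : s ≠ [] := by
        rintro rfl
        simp at hab
      rw [app_lt_app]
      exact IsLyndon.lt_suffix hb a s ha.1 hs rfl
    · simpa using lt_app_of_not_prefix a b hab hp b []
  refine isLyndon_of (by simp [ha.1]) fun u v hu hv e => ?_
  rcases List.append_eq_append_iff.1 e with ⟨s, h1, h2⟩ | ⟨s, h1, h2⟩
  · by_cases hs : s = []
    · subst hs
      simp at h2
      exact h2 ▸ key
    · exact key.trans (IsLyndon.lt_suffix hb s v hs hv h2)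
  · by_cases hs : s = []
    · subst hs
      simp at h2
      exact h2 ▸ key
    · have := IsLyndon.lt_suffix ha u s hu hs h1
      rw [h2]
      apply lt_app_of_length _ _ this
      simp [h1]

/-- repeated word -/
def rep (g : List X) (n : ℕ) : List X := (List.replicate n g).flatten

theorem rep_zero (g : List X) : rep g 0 = [] := rfl
theorem rep_succ (g : List X) (n : ℕ) : rep g (n+1) = g ++ rep g n := by
  simp [rep, List.replicate_succ]
theorem rep_succ' (g : List X) (n : ℕ) : rep g (n+1) = rep g n ++ g := by
  simp [rep, List.replicate_succ']
theorem rep_add (g : List X) (m n : ℕ) : rep g (m+n) = rep g m ++ rep g n := by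
  rw [rep, ← List.replicate_append_replicate, List.flatten_append]; rfl
theorem rep_length (g : List X) (n : ℕ) : (rep g n).length = n * g.length := by
  simp [rep]

theorem IsLyndon.append_rep {a b : List X} (ha : IsLyndon a) (hb : IsLyndon b) (hab : a < b)
    (n : ℕ) : IsLyndon (a ++ rep b n) ∧ a ++ rep b n < b := by
  induction n with
  | zero => simpa [rep_zero] using ⟨ha, hab⟩
  | succ n ih =>
    rw [rep_succ', ← List.append_assoc]
    have := IsLyndon.append ih.1 hb ih.2
    exact ⟨this, IsLyndon.lt_suffix this _ _ ih.1.1 hb.1 rfl⟩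

/-- word of a list of (word, multiplicity) pairs -/
def fl (L : List (List X × ℕ)) : List X :=
  (L.map fun p => (List.replicate p.2 p.1).flatten).flatten

theorem fl_nil : fl ([] : List (List X × ℕ)) = [] := rfl
theorem fl_cons (p : List X × ℕ) (L) : fl (p :: L) = rep p.1 p.2 ++ fl L := by
  simp [fl, rep]
theorem fl_append (L L' : List (List X × ℕ)) : fl (L ++ L') = fl L ++ fl L' := by
  simp [fl]
theorem fl_single (g : List X) (n : ℕ) : fl [(g, n)] = rep g n := by
  simp [fl, rep]

/-- valid factor lists -/
def Val (L : List (List X × ℕ)) : Prop :=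
  (∀ p ∈ L, IsLyndon p.1 ∧ 1 ≤ p.2) ∧ L.Pairwise (fun p q => q.1 < p.1)

theorem cfl_insert : ∀ (L : List (List X × ℕ)), Val L → ∀ d, IsLyndon d →
    ∃ L', Val L' ∧ fl L' = d ++ fl L
  | [], _, d, hd => ⟨[(d, 1)], by simpa [Val] using hd, by simp [fl]⟩
  | (h, m) :: t, hL, d, hd => by
    have hh := (hL.1 (h, m) (by simp))
    have ht : Val t := ⟨fun p hp => hL.1 p (by simp [hp]), (List.pairwise_cons.1 hL.2).2⟩
    have hlt := (List.pairwise_cons.1 hL.2).1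
    rcases lt_trichotomy d h with hc | hc | hc
    · obtain ⟨L', h1, h2⟩ := cfl_insert t ht (d ++ rep h m) (IsLyndon.append_rep hd hh.1 hc m).1
      exact ⟨L', h1, by rw [h2, fl_cons]; simp⟩
    · subst hc
      refine ⟨(d, m+1) :: t, ⟨?_, List.pairwise_cons.2 ⟨hlt, ht.2⟩⟩, ?_⟩
      · intro p hp
        rcases List.mem_cons.1 hp with rfl | hp
        · exact ⟨hd, by simp⟩
        · exact ht.1 p hp
      · simp [fl_cons, rep_succ]
    · refine ⟨(d, 1) :: (h, m) :: t, ⟨?_, List.pairwise_cons.2 ⟨?_, hL.2⟩⟩, ?_⟩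
      · intro p hp
        rcases List.mem_cons.1 hp with rfl | hp
        · exact ⟨hd, by simp⟩
        · exact hL.1 p hp
      · intro p hp
        rcases List.mem_cons.1 hp with rfl | hp
        · exact hc
        · exact (hlt p hp).trans hc
      · simp [fl_cons, rep]

theorem cfl_exists (w : List X) : ∃ L, Val L ∧ fl L = w := by
  induction w with
  | nil => exact ⟨[], by simp [Val], rfl⟩
  | cons x w ih =>
    obtain ⟨L, h1, h2⟩ := ih
    obtain ⟨L', h3, h4⟩ := cfl_insert L h1 [x] (isLyndon_singleton x)
    exact ⟨L', h3, by rw [h4, h2]; rfl⟩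

theorem rep_suffix (Q : List X → Prop) (hQ : ∀ a b, a ≤ b → Q a → Q b) (g : List X)
    (hg : IsLyndon g) (hq : Q g) : ∀ (n : ℕ) (u d : List X), d ≠ [] → u ++ d = rep g n → Q d
  | 0, u, d, hd, h => by simp [rep_zero] at h; exact absurd h.2 hd
  | n+1, u, d, hd, h => by
    rw [rep_succ] at h
    rcases List.append_eq_append_iff.1 h with ⟨s, h1, h2⟩ | ⟨s, h1, h2⟩
    · by_cases hs : s = []
      · subst hs
        exact rep_suffix Q hQ g hg hq n [] d hd (by simpa using h2)
      · refine hQ _ _ (le_app s (rep g n) |>.trans h2.ge) ?_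
        by_cases hu : u = []
        · subst hu; simp at h1; exact h1 ▸ hq
        · exact hQ _ _ (IsLyndon.lt_suffix hg u s hu hs h1).le hq
    · exact rep_suffix Q hQ g hg hq n s d hd h2.symm

theorem fl_suffix (Q : List X → Prop) (hQ : ∀ a b, a ≤ b → Q a → Q b) :
    ∀ (L : List (List X × ℕ)), (∀ p ∈ L, IsLyndon p.1 ∧ Q p.1) →
      ∀ (u d : List X), d ≠ [] → u ++ d = fl L → Q d
  | [], _, u, d, hd, h => by simp [fl_nil] at h; exact absurd h.2 hd
  | p :: L, hL, u, d, hd, h => by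
    rw [fl_cons] at h
    have hL' : ∀ p ∈ L, IsLyndon p.1 ∧ Q p.1 := fun q hq => hL q (by simp [hq])
    rcases List.append_eq_append_iff.1 h with ⟨s, h1, h2⟩ | ⟨s, h1, h2⟩
    · by_cases hs : s = []
      · subst hs
        exact fl_suffix Q hQ L hL' [] d hd (by simpa using h2)
      · refine hQ _ _ (le_app s (fl L) |>.trans h2.ge) ?_
        exact rep_suffix Q hQ p.1 (hL p (by simp)).1 (hL p (by simp)).2 p.2 u s hs h1.symm
    · exact fl_suffix Q hQ L hL' s d hd h2.symm

theorem prefix_lyndon : ∀ (L : List (List X × ℕ)) (b : List X), IsLyndon b →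
    (∀ p ∈ L, IsLyndon p.1 ∧ b ++ fl L < p.1) → IsLyndon (b ++ fl L)
  | [], b, hb, _ => by simpa [fl_nil] using hb
  | p :: L, b, hb, h => by
    have hp := h p (by simp)
    have h1 : b < p.1 := lt_of_le_of_lt (le_app b _) hp.2
    have h2 := (IsLyndon.append_rep hb hp.1 h1 p.2).1
    have e : b ++ fl (p :: L) = (b ++ rep p.1 p.2) ++ fl L := by simp [fl_cons]
    rw [e]
    refine prefix_lyndon L _ h2 fun q hq => ?_
    rw [← e]
    exact h q (by simp [hq])

theorem factors_gt (x : X) (L : List (List X × ℕ)) (hL : Val L) (h : IsLyndon (x :: fl L)) :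
    ∀ p ∈ L, x :: fl L < p.1 := by
  rcases List.eq_nil_or_concat L with rfl | ⟨L0, q, rfl⟩
  · simp
  · rw [List.concat_eq_append] at *
    have hq := hL.1 q (by simp)
    obtain ⟨m, hm⟩ : ∃ m, q.2 = m + 1 := ⟨q.2 - 1, by omega⟩
    have key : x :: fl (L0 ++ [q]) < q.1 := by
      refine IsLyndon.lt_suffix h (x :: (fl L0 ++ rep q.1 m)) q.1 (by simp) hq.1.1 ?_
      rw [fl_append, fl_cons, fl_nil, hm, rep_succ']
      simp
    intro p hp
    rcases List.mem_append.1 hp with hp | hp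
    · exact key.trans ((List.pairwise_append.1 hL.2).2.2 p hp q (by simp))
    · simp at hp; exact hp ▸ key

/-- standard factorization -/
theorem std_fact (x : X) (L : List (List X × ℕ)) (g : List X) (hg : IsLyndon g)
    (hL : ∀ p ∈ L, IsLyndon p.1 ∧ g ≤ p.1) (d b : List X)
    (h : (x :: fl L) ++ g = b ++ d) (hb : b ≠ []) (hd : IsLyndon d) : d.length ≤ g.length := by
  by_contra hc
  push Not at hc
  rcases List.append_eq_append_iff.1 h with ⟨s, h1, h2⟩ | ⟨s, h1, h2⟩
  · have := congrArg List.length h2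
    simp at this; omega
  · have hs : s ≠ [] := by rintro rfl; simp at h2; simp [h2] at hc
    obtain ⟨y, b', rfl⟩ := List.exists_cons_of_ne_nil hb
    simp at h1
    have := fl_suffix (fun a => g ≤ a) (fun a b h h' => h'.trans h) L hL b' s hs h1.2.symm
    have h3 := IsLyndon.lt_suffix hd s g hs hg.1 h2
    have h4 : g ≤ d := this.trans (h2 ▸ le_app s g)
    exact absurd h3 (not_lt.2 h4)

end Words

section Sets
variable {X : Type*} [LinearOrder X]
open Classical

/-- factorization avoiding P -/
def Fac (P : List (List X)) (a : List X) : Prop :=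
  ∃ x L, a = x :: fl L ∧ Val L ∧ ∀ p ∈ L, p.1 ∉ P

/-- current letters -/
noncomputable def AA (P : List (List X)) : Finset (List X) := P.toFinset.filter (Fac P)

/-- good lists of remaining Lyndon words -/
def Good (N : ℕ) (P : List (List X)) : Prop :=
  (∀ a ∈ P, IsLyndon a ∧ a.length ≤ N) ∧ P.Pairwise (fun a b => b < a) ∧
    ∀ d, IsLyndon d → d.length ≤ N → ∀ b ∈ P, d < b → d ∈ P

theorem Good.tail {N : ℕ} {g : List X} {P : List (List X)} (h : Good N (g :: P)) : Good N P := by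
  refine ⟨fun a ha => h.1 a (by simp [ha]), (List.pairwise_cons.1 h.2.1).2, fun d hd hl b hb hdb => ?_⟩
  have := h.2.2 d hd hl b (by simp [hb]) hdb
  rcases List.mem_cons.1 this with rfl | h1
  · exact absurd ((List.pairwise_cons.1 h.2.1).1 b hb) (not_lt.2 hdb.le)
  · exact h1

theorem Good.lt {N : ℕ} {g : List X} {P : List (List X)} (h : Good N (g :: P)) :
    ∀ a ∈ P, a < g := (List.pairwise_cons.1 h.2.1).1

theorem length_le_fl (L : List (List X × ℕ)) (hL : Val L) (p) (hp : p ∈ L) :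
    p.1.length ≤ (fl L).length := by
  obtain ⟨s, t, rfl⟩ := List.append_of_mem hp
  rw [fl_append, fl_cons, List.length_append, List.length_append, rep_length]
  have := (hL.1 p hp).2
  nlinarith [Nat.zero_le p.1.length]

theorem self_mem {N : ℕ} {g : List X} {P : List (List X)} (h : Good N (g :: P)) :
    g ∈ AA (g :: P) := by
  have hg := h.1 g (by simp)
  refine Finset.mem_filter.2 ⟨by simp, ?_⟩
  obtain ⟨x, w, rfl⟩ := List.exists_cons_of_ne_nil hg.1.1
  obtain ⟨L, hL, rfl⟩ := cfl_exists w
  refine ⟨x, L, rfl, hL, fun p hp hm => ?_⟩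
  have h1 := factors_gt x L hL hg.1 p hp
  rcases List.mem_cons.1 hm with h2 | h2
  · exact absurd h2 h1.ne'
  · exact lt_asymm h1 (h.lt _ h2)

theorem fac_gt {N : ℕ} {g : List X} {P : List (List X)} (h : Good N (g :: P)) {L}
    (hL : Val L) (hlen : (fl L).length ≤ N) (hP : ∀ p ∈ L, p.1 ∉ g :: P) :
    ∀ p ∈ L, g < p.1 := by
  intro p hp
  by_contra hc
  rcases lt_or_eq_of_le (not_lt.1 hc) with h1 | h1
  · exact hP p hp (h.2.2 _ (hL.1 p hp).1 ((length_le_fl L hL p hp).trans hlen) g (by simp) h1)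
  · exact hP p hp (by simp [h1])

theorem erase_spec {N : ℕ} {g : List X} {P : List (List X)} (h : Good N (g :: P)) {a}
    (ha : a ∈ (AA (g :: P)).erase g) : IsLyndon a ∧ a.length ≤ N ∧ a < g ∧ a ∈ P ∧
      ∃ x L, a = x :: fl L ∧ Val L ∧ (∀ p ∈ L, g < p.1) := by
  rw [Finset.mem_erase] at ha
  obtain ⟨h1, h2⟩ := ha
  obtain ⟨h2, x, L, rfl, hL, hP⟩ := Finset.mem_filter.1 h2
  rw [List.mem_toFinset] at h2
  have h3 := h.1 _ h2
  have h4 := (List.mem_cons.1 h2).resolve_left h1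
  refine ⟨h3.1, h3.2, h.lt _ h4, h4, x, L, rfl, hL, fac_gt h hL ?_ hP⟩
  have := h3.2
  simp at this; omega

theorem val_snoc {g : List X} {L : List (List X × ℕ)} (hg : IsLyndon g) (hL : Val L)
    (h : ∀ p ∈ L, g < p.1) (n : ℕ) (hn : 1 ≤ n) : Val (L ++ [(g, n)]) := by
  refine ⟨fun p hp => ?_, List.pairwise_append.2 ⟨hL.2, by simp, ?_⟩⟩
  · rcases List.mem_append.1 hp with hp | hp
    · exact hL.1 p hp
    · simp at hp; subst hp; exact ⟨hg, hn⟩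
  · intro a ha b hb
    simp at hb; subst hb; exact h a ha

theorem map_mem {N : ℕ} {g : List X} {P : List (List X)} (h : Good N (g :: P)) {a}
    (ha : a ∈ (AA (g :: P)).erase g) (n : ℕ) (hn : (a ++ rep g n).length ≤ N) :
    a ++ rep g n ∈ AA P := by
  obtain ⟨h1, h2, h3, h4, x, L, rfl, hL, hgt⟩ := erase_spec h ha
  have hg := h.1 g (by simp)
  obtain ⟨h5, h6⟩ := IsLyndon.append_rep h1 hg.1 h3 n
  have hP : ∀ q : List X, g ≤ q → q ∉ P := fun q hq hm => absurd (h.lt _ hm) (not_lt.2 hq)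
  refine Finset.mem_filter.2 ⟨?_, ?_⟩
  · rw [List.mem_toFinset]
    exact (List.mem_cons.1 (h.2.2 _ h5 hn g (by simp) h6)).resolve_left h6.ne
  · rcases Nat.eq_zero_or_pos n with rfl | hn
    · exact ⟨x, L, by simp [rep_zero], hL, fun p hp => hP _ (hgt p hp).le⟩
    · refine ⟨x, L ++ [(g, n)], by simp [fl_append, fl_single], val_snoc hg.1 hL hgt n hn, ?_⟩
      intro p hp
      rcases List.mem_append.1 hp with hp | hp
      · exact hP _ (hgt p hp).le
      · simp at hp; subst hp; exact hP _ le_rfl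

theorem map_surj {N : ℕ} {g : List X} {P : List (List X)} (h : Good N (g :: P)) {b}
    (hb : b ∈ AA P) : ∃ a ∈ (AA (g :: P)).erase g, ∃ n, b = a ++ rep g n := by
  obtain ⟨h2, x, L, rfl, hL, hP⟩ := Finset.mem_filter.1 hb
  rw [List.mem_toFinset] at h2
  have hlt := h.lt _ h2
  have h3 := h.1 _ (List.mem_cons_of_mem g h2)
  by_cases hc : ∀ p ∈ L, p.1 ≠ g
  · refine ⟨x :: fl L, ?_, 0, by simp [rep_zero]⟩
    rw [Finset.mem_erase]
    refine ⟨hlt.ne, Finset.mem_filter.2 ⟨by simp [h2], x, L, rfl, hL, fun p hp => ?_⟩⟩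
    simp only [List.mem_cons, not_or]
    exact ⟨hc p hp, hP p hp⟩
  · push Not at hc
    obtain ⟨q, hq, hqg⟩ := hc
    obtain ⟨s, t, rfl⟩ := List.append_of_mem hq
    have hge : ∀ p ∈ s ++ q :: t, g ≤ p.1 := by
      intro p hp
      by_contra hc
      refine hP p hp ?_
      have hl := length_le_fl _ hL p hp
      have hl2 := h3.2
      rw [List.length_cons] at hl2
      have := h.2.2 _ (hL.1 p hp).1 (by omega) g (by simp) (not_le.1 hc)
      exact (List.mem_cons.1 this).resolve_left (not_le.1 hc).ne
    have hpw := List.pairwise_append.1 hL.2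
    have ht : t = [] := by
      rcases t with _ | ⟨r, t⟩
      · rfl
      · have h5 := (List.pairwise_cons.1 hpw.2.1).1 r (by simp)
        have h6 := hge r (by simp)
        rw [hqg] at h5
        exact absurd h5 (not_lt.2 h6)
    subst ht
    have hfl : x :: fl (s ++ [q]) = (x :: fl s) ++ rep g q.2 := by
      rw [fl_append, fl_cons, fl_nil, hqg]; simp
    have hs : Val s := ⟨fun p hp => hL.1 p (by simp [hp]), hpw.1⟩
    have hle : x :: fl s ≤ x :: fl (s ++ [q]) := by rw [hfl]; exact le_app _ _
    have hly : IsLyndon (x :: fl s) := by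
      refine prefix_lyndon s [x] (isLyndon_singleton x) fun p hp => ⟨(hs.1 p hp).1, ?_⟩
      exact lt_of_le_of_lt hle (factors_gt x _ hL h3.1 p (by simp [hp]))
    refine ⟨x :: fl s, ?_, q.2, hfl⟩
    have hlt2 : x :: fl s < g := lt_of_le_of_lt hle hlt
    rw [Finset.mem_erase]
    refine ⟨hlt2.ne, Finset.mem_filter.2 ⟨?_, x, s, rfl, hs, fun p hp => ?_⟩⟩
    · rw [List.mem_toFinset]
      refine h.2.2 _ hly ?_ g (by simp) hlt2
      have := h3.2
      rw [hfl, List.length_append] at this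
      omega
    · simp only [List.mem_cons, not_or]
      refine ⟨?_, hP p (by simp [hp])⟩
      have := hpw.2.2 p hp q (by simp)
      rw [hqg] at this
      exact this.ne'

theorem map_inj_aux {N : ℕ} {g : List X} {P : List (List X)} (h : Good N (g :: P)) {a b}
    (ha : a ∈ (AA (g :: P)).erase g) (hb : b ∈ (AA (g :: P)).erase g) (m n : ℕ) (hmn : m ≤ n)
    (e : a ++ rep g m = b ++ rep g n) : a = b ∧ m = n := by
  obtain ⟨j, rfl⟩ := Nat.exists_eq_add_of_le hmn
  rw [Nat.add_comm, rep_add, ← List.append_assoc] at e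
  have e1 := List.append_cancel_right e
  rcases j with _ | j
  · simpa [rep_zero] using e1
  · exfalso
    obtain ⟨-, -, -, -, x, L, rfl, hL, hgt⟩ := erase_spec h ha
    obtain ⟨-, -, -, -, y, L', rfl, -, -⟩ := erase_spec h hb
    rw [rep_succ', ← List.append_assoc, List.cons_append, List.cons_append] at e1
    have e2 := (List.cons.inj e1).2
    exact lt_irrefl g (fl_suffix (fun a => g < a) (fun a b h h' => lt_of_lt_of_le h' h) L
      (fun p hp => ⟨(hL.1 p hp).1, hgt p hp⟩) _ g (h.1 g (by simp)).1.1 e2.symm)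

theorem map_inj {N : ℕ} {g : List X} {P : List (List X)} (h : Good N (g :: P)) {a b}
    (ha : a ∈ (AA (g :: P)).erase g) (hb : b ∈ (AA (g :: P)).erase g) (m n : ℕ)
    (e : a ++ rep g m = b ++ rep g n) : a = b ∧ m = n := by
  rcases le_total m n with hmn | hmn
  · exact map_inj_aux h ha hb m n hmn e
  · have := map_inj_aux h hb ha n m hmn e.symm
    exact ⟨this.1.symm, this.2.symm⟩

theorem sum_AA {A : Type*} [AddCommMonoid A] {N : ℕ} {g : List X} {P : List (List X)}
    (h : Good N (g :: P)) (F : List X → A) (hF : ∀ w, N < w.length → F w = 0) :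
    ∑ b ∈ AA P, F b = ∑ a ∈ (AA (g :: P)).erase g, ∑ n ∈ Finset.range (N+1), F (a ++ rep g n) := by
  rw [← Finset.sum_product' (f := fun a n => F (a ++ rep g n))]
  symm
  have hlen : ∀ w, F w ≠ 0 → w.length ≤ N := fun w hw => not_lt.1 fun hc => hw (hF w hc)
  refine Finset.sum_bij_ne_zero (fun q _ _ => q.1 ++ rep g q.2) ?_ ?_ ?_ ?_
  · intro q hq hne
    exact map_mem h (Finset.mem_product.1 hq).1 _ (hlen _ hne)
  · intro q hq _ q' hq' _ e
    have := map_inj h (Finset.mem_product.1 hq).1 (Finset.mem_product.1 hq').1 _ _ e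
    exact Prod.ext this.1 this.2
  · intro b hb hne
    obtain ⟨a, ha, n, rfl⟩ := map_surj h hb
    refine ⟨(a, n), Finset.mem_product.2 ⟨ha, ?_⟩, hne, rfl⟩
    have := hlen _ hne
    rw [List.length_append, rep_length] at this
    have h2 := List.length_pos_iff.2 (h.1 g (by simp)).1.1
    simp only [Finset.mem_range]
    nlinarith
  · intro q hq _; rfl

end Sets

section Alg
open Classical Finset

theorem comm_pow {k A : Type*} [Field k] [CharZero k] [Ring A] [Algebra k A] (a : ℕ → A) (b : A)
    (h : ∀ n, a (n+1) = a n * b - b * a n) (n : ℕ) :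
    a 0 * ((n.factorial : k)⁻¹ • b ^ n) = ∑ q ∈ antidiagonal n,
      ((q.1.factorial : k)⁻¹ • b ^ q.1) * ((q.2.factorial : k)⁻¹ • a q.2) := by
  have hc : Commute (LinearMap.mulLeft k b) (LinearMap.mulRight k b - LinearMap.mulLeft k b) := by
    apply Commute.sub_right
    · exact LinearMap.commute_mulLeft_right b b
    · exact Commute.refl _
  have h1 : ∀ n, ((LinearMap.mulRight k b - LinearMap.mulLeft k b) ^ n) (a 0) = a n := by
    intro n
    induction n with
    | zero => simp
    | succ n ih => rw [pow_succ', Module.End.mul_apply, ih, h]; simp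
  have h2 := hc.add_pow' n
  have h3 := congrArg (fun f => f (a 0)) h2
  simp only [add_sub_cancel, LinearMap.pow_mulRight, LinearMap.mulRight_apply] at h3
  rw [mul_smul_comm, h3, LinearMap.sum_apply, Finset.smul_sum]
  refine Finset.sum_congr rfl fun q hq => ?_
  rw [LinearMap.smul_apply, Module.End.mul_apply, h1, LinearMap.pow_mulLeft,
    LinearMap.mulLeft_apply, smul_mul_smul_comm, ← Nat.cast_smul_eq_nsmul k, smul_smul]
  congr 1
  have hq' := HasAntidiagonal.mem_antidiagonal.1 hq
  subst hq'
  rw [Nat.choose_symm_add, Nat.add_choose, Nat.cast_div (Nat.factorial_mul_factorial_dvd_factorial_add _ _)]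
  · have := Nat.cast_ne_zero (R := k).2 (Nat.factorial_ne_zero (q.1+q.2))
    push_cast
    field_simp
  · exact_mod_cast mul_ne_zero (Nat.factorial_ne_zero _) (Nat.factorial_ne_zero _)

theorem triangle {A : Type*} [AddCommMonoid A] (N : ℕ) (f : ℕ → ℕ → A)
    (hf : ∀ m n, N < m + n → f m n = 0) :
    ∑ m ∈ range (N+1), ∑ n ∈ range (N+1), f m n =
      ∑ s ∈ range (N+1), ∑ q ∈ antidiagonal s, f q.1 q.2 := by
  rw [← Finset.sum_product', Finset.sum_sigma']
  symm
  refine Finset.sum_bij_ne_zero (fun q _ _ => q.2) ?_ ?_ ?_ ?_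
  · intro q hq _
    simp only [mem_sigma, mem_range, HasAntidiagonal.mem_antidiagonal, mem_product] at hq ⊢
    omega
  · rintro ⟨s, q⟩ hq _ ⟨s', q'⟩ hq' _ e
    simp only [mem_sigma, mem_range, HasAntidiagonal.mem_antidiagonal] at hq hq' e
    subst e
    obtain rfl : s = s' := by omega
    rfl
  · rintro ⟨m, n⟩ hq hne
    have : m + n ≤ N := not_lt.1 fun hc => hne (hf m n hc)
    exact ⟨⟨m+n, (m, n)⟩, by simp; omega, hne, rfl⟩
  · intros; rfl

variable {k : Type*} [Field k] [CharZero k] {M : ℕ} {A : Type*} [Ring A] [Algebra k A]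

/-- content of a word -/
def cnt (w : List (Fin M)) : Fin M → ℤ := fun x => (w.count x : ℤ)

theorem cnt_append (u v : List (Fin M)) : cnt (u ++ v) = cnt u + cnt v := by
  ext x; simp [cnt]

theorem cnt_rep (g : List (Fin M)) (n : ℕ) : cnt (rep g n) = (n : ℤ) • cnt g := by
  induction n with
  | zero => ext x; simp [rep_zero, cnt]
  | succ n ih => rw [rep_succ', cnt_append, ih]; push_cast; rw [add_smul, one_smul]

/-- total degree -/
def deg (i : Fin M → ℤ) : ℤ := ∑ x, i x

theorem deg_sub (i j : Fin M → ℤ) : deg (i - j) = deg i - deg j := by simp [deg]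
theorem deg_smul (m : ℤ) (j : Fin M → ℤ) : deg (m • j) = m * deg j := by
  simp [deg, Finset.mul_sum]
theorem deg_cnt (w : List (Fin M)) : deg (cnt w) = w.length := by
  simp only [deg, cnt]
  have := Multiset.sum_count_eq_card (s := Finset.univ) (m := (w : Multiset (Fin M))) (by simp)
  simp at this
  exact_mod_cast this

/-- truncated product of exponentials -/
noncomputable def HH (k : Type*) [Field k] [Algebra k A] (b : List (Fin M) → A) (N : ℕ) :
    List (List (Fin M)) → (Fin M → ℤ) → A
  | [], i => if i = 0 then 1 else 0
  | g :: P, i => ∑ m ∈ range (N+1),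
      ((m.factorial : k)⁻¹ • b g ^ m) * HH k b N P (i - (m : ℤ) • cnt g)

theorem HH_neg (b : List (Fin M) → A) (N : ℕ) : ∀ (P : List (List (Fin M))) (i : Fin M → ℤ) (x),
    i x < 0 → HH k b N P i = 0
  | [], i, x, h => by
    rw [HH, if_neg]; rintro rfl; simp at h
  | g :: P, i, x, h => by
    rw [HH]
    refine Finset.sum_eq_zero fun m _ => ?_
    rw [HH_neg b N P _ x, mul_zero]
    simp only [cnt, Pi.sub_apply, Pi.smul_apply, smul_eq_mul]
    have : (0:ℤ) ≤ m * (g.count x : ℤ) := by positivity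
    linarith

theorem HH_deg (b : List (Fin M) → A) (N : ℕ) (P : List (List (Fin M))) (i : Fin M → ℤ)
    (h : deg i < 0) : HH k b N P i = 0 := by
  obtain ⟨x, -, hx⟩ : ∃ x ∈ Finset.univ, i x < 0 := by
    by_contra hc
    push Not at hc
    exact absurd h (not_lt.2 (Finset.sum_nonneg hc))
  exact HH_neg b N P i x hx

theorem HH_zero (b : List (Fin M) → A) (N : ℕ) : ∀ (P : List (List (Fin M))), (∀ g ∈ P, g ≠ []) →
    HH k b N P 0 = 1
  | [], _ => by simp [HH]
  | g :: P, h => by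
    rw [HH, Finset.sum_eq_single 0]
    · simp [HH_zero b N P (fun g hg => h g (by simp [hg]))]
    · intro m _ hm
      rw [HH_deg, mul_zero]
      have := List.length_pos_iff.2 (h g (by simp))
      rw [deg_sub, deg_smul, deg_cnt]
      have h2 : 0 < (m:ℤ) * g.length := by positivity
      simp [deg] at *
      omega
    · simp

/-- weight of a factor list -/
noncomputable def wt (c : List (Fin M) → k) (L : List (List (Fin M) × ℕ)) : k :=
  (L.map fun p => c p.1 ^ p.2 / (p.2.factorial : k)).prod

theorem main_step (E : List (Fin M) → A) (c : List (Fin M) → k)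
    (hE : ∀ αL αR : List (Fin M), IsLyndon (αL ++ αR) → αL ≠ [] → IsLyndon αR →
      (∀ δ β' : List (Fin M), αL ++ αR = β' ++ δ → β' ≠ [] → IsLyndon δ →
        δ.length ≤ αR.length) →
      E (αL ++ αR) = E αL * E αR - E αR * E αL)
    (hc : ∀ x L, Val L → IsLyndon (x :: fl L) →
      ((x :: fl L).length : k) * c (x :: fl L) = wt c L) (N : ℕ) :
    ∀ (P : List (List (Fin M))), Good N P → ∀ i : Fin M → ℤ, deg i ≤ N →
      (deg i : k) • HH k (fun w => c w • E w) N P i =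
        ∑ a ∈ AA P, ((a.length : k) * c a) •
          (E a * HH k (fun w => c w • E w) N P (i - cnt a))
  | [], _, i, _ => by
    have : AA ([] : List (List (Fin M))) = ∅ := by simp [AA]
    rw [this, Finset.sum_empty, HH]
    split_ifs with h
    · subst h; simp [deg]
    · simp
  | g :: P, hG, i, hi => by
    have ih := main_step E c hE hc N P hG.tail
    have hg := hG.1 g (by simp)
    have hgl : 0 < g.length := List.length_pos_iff.2 hg.1.1
    set b : List (Fin M) → A := fun w => c w • E w with hb
    set H := HH k b N P with hH
    have hHd : ∀ j, deg j < 0 → H j = 0 := fun j hj => HH_deg b N P j hj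
    -- split
    have e1 : (deg i : k) • HH k b N (g :: P) i =
        ∑ m ∈ range (N+1), ((m : k) * g.length) •
          (((m.factorial : k)⁻¹ • b g ^ m) * H (i - (m : ℤ) • cnt g)) +
        ∑ m ∈ range (N+1), ((m.factorial : k)⁻¹ • b g ^ m) *
          ((deg (i - (m : ℤ) • cnt g) : k) • H (i - (m : ℤ) • cnt g)) := by
      rw [HH, Finset.smul_sum, ← Finset.sum_add_distrib]
      refine Finset.sum_congr rfl fun m _ => ?_
      rw [mul_smul_comm, ← add_smul]
      congr 1
      rw [deg_sub, deg_smul, deg_cnt]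
      push_cast
      ring
    have e2 : ∑ m ∈ range (N+1), ((m : k) * g.length) •
          (((m.factorial : k)⁻¹ • b g ^ m) * H (i - (m : ℤ) • cnt g)) =
        ((g.length : k) * c g) • (E g * HH k b N (g :: P) (i - cnt g)) := by
      rw [Finset.sum_range_succ', HH, Finset.sum_range_succ]
      have hz : H (i - cnt g - (N : ℤ) • cnt g) = 0 := by
        apply hHd
        rw [deg_sub, deg_sub, deg_smul, deg_cnt]
        have : (1:ℤ) ≤ g.length := by exact_mod_cast hgl
        nlinarith
      rw [← hH, hz]
      simp only [mul_zero, add_zero, Nat.cast_zero, zero_mul, zero_smul]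
      rw [Finset.mul_sum, Finset.smul_sum]
      refine Finset.sum_congr rfl fun m _ => ?_
      have hd : i - ((m+1 : ℕ) : ℤ) • cnt g = i - cnt g - (m : ℤ) • cnt g := by
        push_cast; rw [add_smul, one_smul]; abel
      rw [hd, pow_succ', hb]
      simp only [smul_mul_assoc, mul_smul_comm, smul_smul, mul_assoc]
      congr 1
      rw [Nat.factorial_succ]
      have := Nat.cast_ne_zero (R := k).2 (Nat.factorial_ne_zero m)
      have h1 : ((m : k) + 1) ≠ 0 := by exact_mod_cast Nat.succ_ne_zero m
      push_cast
      field_simp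
    have e3 : ∑ m ∈ range (N+1), ((m.factorial : k)⁻¹ • b g ^ m) *
          ((deg (i - (m : ℤ) • cnt g) : k) • H (i - (m : ℤ) • cnt g)) =
        ∑ a ∈ (AA (g :: P)).erase g, ((a.length : k) * c a) •
          (E a * HH k b N (g :: P) (i - cnt a)) := by
      have f1 : ∀ m ∈ range (N+1), ((m.factorial : k)⁻¹ • b g ^ m) *
          ((deg (i - (m : ℤ) • cnt g) : k) • H (i - (m : ℤ) • cnt g)) =
          ∑ a ∈ (AA (g :: P)).erase g, ∑ n ∈ range (N+1), ((m.factorial : k)⁻¹ • b g ^ m) *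
            ((((a ++ rep g n).length : k) * c (a ++ rep g n)) •
              (E (a ++ rep g n) * H (i - (m : ℤ) • cnt g - cnt (a ++ rep g n)))) := by
        intro m _
        have hdm : deg (i - (m : ℤ) • cnt g) ≤ N := by
          rw [deg_sub, deg_smul, deg_cnt]
          have : (0:ℤ) ≤ m * g.length := by positivity
          linarith
        rw [ih _ hdm, sum_AA hG]
        · simp only [Finset.mul_sum]
        · intro w hw
          rw [hHd, mul_zero, smul_zero]
          rw [deg_sub, deg_cnt]
          have : (N:ℤ) < w.length := by exact_mod_cast hw
          linarith
      rw [Finset.sum_congr rfl f1, Finset.sum_comm]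
      refine Finset.sum_congr rfl fun a ha => ?_
      obtain ⟨h1, h2, h3, h4, x, L, rfl, hL, hgt⟩ := erase_spec hG ha
      set a := x :: fl L with haL
      have hEn : ∀ n, E (a ++ rep g (n+1)) = E (a ++ rep g n) * E g - E g * E (a ++ rep g n) := by
        intro n
        obtain ⟨h5, h6⟩ := IsLyndon.append_rep h1 hg.1 h3 n
        rw [rep_succ', ← List.append_assoc]
        refine hE _ _ (IsLyndon.append h5 hg.1 h6) h5.1 hg.1 fun d b' e hb' hd => ?_
        refine std_fact x (L ++ [(g, n)]) g hg.1 ?_ d b' ?_ hb' hd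
        · intro p hp
          rcases List.mem_append.1 hp with hp | hp
          · exact ⟨(hL.1 p hp).1, (hgt p hp).le⟩
          · simp at hp; subst hp; exact ⟨hg.1, le_rfl⟩
        · rw [← e, fl_append, fl_single, haL]; simp
      have hD : ∀ n, ((a ++ rep g n).length : k) * c (a ++ rep g n) =
          ((a.length : k) * c a) * (c g ^ n / (n.factorial : k)) := by
        intro n
        rcases Nat.eq_zero_or_pos n with rfl | hn
        · simp [rep_zero]
        · have h5 := (IsLyndon.append_rep h1 hg.1 h3 n).1
          have e : a ++ rep g n = x :: fl (L ++ [(g, n)]) := by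
            rw [fl_append, fl_single, haL]; simp
          rw [e] at h5 ⊢
          rw [hc x _ (val_snoc hg.1 hL hgt n hn) h5, haL, hc x L hL h1]
          simp [wt]
      have hcp := comm_pow (k := k) (fun n => c g ^ n • E (a ++ rep g n)) (b g) (by
        intro n
        simp only [hEn, hb, smul_sub, mul_smul_comm, smul_mul_assoc, smul_smul, pow_succ]
        simp only [mul_comm])
      rw [triangle, HH, Finset.mul_sum, Finset.smul_sum]
      · refine Finset.sum_congr rfl fun s _ => ?_
        have h0 := hcp s
        simp only [pow_zero, one_smul, rep_zero, List.append_nil] at h0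
        rw [← mul_assoc, h0, Finset.sum_mul, Finset.smul_sum]
        refine Finset.sum_congr rfl fun q hq => ?_
        have hq' := HasAntidiagonal.mem_antidiagonal.1 hq
        have hdeg : i - (q.1 : ℤ) • cnt g - cnt (a ++ rep g q.2) = i - cnt a - (s : ℤ) • cnt g := by
          rw [cnt_append, cnt_rep, ← hq']
          push_cast
          rw [add_smul]; abel
        rw [hdeg, hD]
        simp only [smul_mul_assoc, mul_smul_comm, smul_smul, mul_assoc]
        congr 1
        ring
      · intro m n hmn
        rw [hHd, mul_zero, smul_zero, mul_zero]
        rw [cnt_append, cnt_rep]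
        have : i - (m : ℤ) • cnt g - (cnt a + (n : ℤ) • cnt g) =
          i - cnt a - ((m + n : ℕ) : ℤ) • cnt g := by
          push_cast; rw [add_smul]; abel
        rw [this, deg_sub, deg_sub, deg_smul, deg_cnt, deg_cnt]
        have h7 : (1:ℤ) ≤ g.length := by exact_mod_cast hgl
        have h8 : (N:ℤ) < (m+n : ℕ) := by exact_mod_cast hmn
        have h9 : (0:ℤ) ≤ a.length := by positivity
        nlinarith
    rw [e1, e2, e3]
    convert Finset.add_sum_erase _ (fun a => ((a.length : k) * c a) •
      (E a * HH k b N (g :: P) (i - cnt a))) (self_mem hG)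

end Alg

section Fin
open Finset

variable {k : Type*} [Field k] [CharZero k] {M : ℕ} {A : Type*} [Ring A] [Algebra k A]

/-- lists of factors with words from P, multiplicities at most N -/
def LL (N : ℕ) : List (List (Fin M)) → Finset (List (List (Fin M) × ℕ))
  | [] => {[]}
  | g :: P => LL N P ∪ ((Finset.Icc 1 N) ×ˢ LL N P).image (fun q => (g, q.1) :: q.2)

theorem mem_LL (N : ℕ) : ∀ (P : List (List (Fin M))), P.Pairwise (fun a b => b < a) →
    ∀ L, L ∈ LL N P ↔ (∀ p ∈ L, p.1 ∈ P ∧ 1 ≤ p.2 ∧ p.2 ≤ N) ∧ L.Pairwise (fun p q => q.1 < p.1)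
  | [], _, L => by
    rw [LL, Finset.mem_singleton]
    constructor
    · rintro rfl; simp
    · rintro ⟨h, -⟩
      exact List.eq_nil_iff_forall_not_mem.2 fun p hp => by simpa using (h p hp).1
  | g :: P, hP, L => by
    have hlt := (List.pairwise_cons.1 hP).1
    have ih := mem_LL N P (List.pairwise_cons.1 hP).2
    rw [LL, Finset.mem_union, ih, Finset.mem_image]
    constructor
    · rintro (⟨h1, h2⟩ | ⟨⟨m, t⟩, hq, rfl⟩)
      · exact ⟨fun p hp => ⟨List.mem_cons_of_mem _ (h1 p hp).1, (h1 p hp).2⟩, h2⟩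
      · rw [Finset.mem_product, ih, Finset.mem_Icc] at hq
        obtain ⟨hm, h1, h2⟩ := hq
        refine ⟨fun p hp => ?_, List.pairwise_cons.2 ⟨fun p hp => hlt _ (h1 p hp).1, h2⟩⟩
        rcases List.mem_cons.1 hp with rfl | hp
        · exact ⟨by simp, hm⟩
        · exact ⟨List.mem_cons_of_mem _ (h1 p hp).1, (h1 p hp).2⟩
    · rintro ⟨h1, h2⟩
      rcases L with _ | ⟨⟨w, m⟩, t⟩
      · left; simp
      · have h3 := (List.pairwise_cons.1 h2).1
        have hw := h1 (w, m) (by simp)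
        have hwg : w ≤ g := by
          rcases List.mem_cons.1 hw.1 with h | h
          · exact h.le
          · exact (hlt _ h).le
        have ht : ∀ p ∈ t, p.1 ∈ P := fun p hp =>
          (List.mem_cons.1 (h1 p (by simp [hp])).1).resolve_left
            (lt_of_lt_of_le (h3 p hp) hwg).ne
        by_cases hc : w = g
        · right
          subst hc
          refine ⟨(m, t), ?_, rfl⟩
          rw [Finset.mem_product, ih, Finset.mem_Icc]
          exact ⟨hw.2, fun p hp => ⟨ht p hp, (h1 p (by simp [hp])).2⟩, (List.pairwise_cons.1 h2).2⟩
        · left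
          refine ⟨fun p hp => ⟨?_, (h1 p hp).2⟩, h2⟩
          rcases List.mem_cons.1 hp with rfl | hp
          · exact (List.mem_cons.1 hw.1).resolve_left hc
          · exact ht p hp

/-- content of a factor list -/
def cont (L : List (List (Fin M) × ℕ)) : Fin M → ℤ := (L.map fun p => (p.2 : ℤ) • cnt p.1).sum

/-- value of a factor list -/
noncomputable def val (k : Type*) [Field k] [Algebra k A] (b : List (Fin M) → A)
    (L : List (List (Fin M) × ℕ)) : A :=
  (L.map fun p => (p.2.factorial : k)⁻¹ • b p.1 ^ p.2).prod

theorem HH_eq (b : List (Fin M) → A) (N : ℕ) : ∀ (P : List (List (Fin M))),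
    P.Pairwise (fun a b => b < a) → ∀ i,
    HH k b N P i = ∑ L ∈ LL N P, if cont L = i then val k b L else 0
  | [], _, i => by
    simp only [HH, LL, Finset.sum_singleton, cont, val, List.map_nil, List.sum_nil, List.prod_nil]
    simp only [eq_comm]
  | g :: P, hP, i => by
    have ih := HH_eq b N P (List.pairwise_cons.1 hP).2
    have hlt := (List.pairwise_cons.1 hP).1
    rw [LL, Finset.sum_union, Finset.sum_image, Finset.sum_product, HH, Finset.sum_range_succ']
    · rw [add_comm]
      congr 1
      · simp [ih]
      · rw [Finset.range_eq_Ico, Finset.sum_Ico_add' (fun m : ℕ =>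
          ((m.factorial : k)⁻¹ • b g ^ m) * HH k b N P (i - (m : ℤ) • cnt g)) 0 N 1]
        refine Finset.sum_congr (by ext; simp) fun m _ => ?_
        rw [ih, Finset.mul_sum]
        refine Finset.sum_congr rfl fun L _ => ?_
        have : cont ((g, m) :: L) = (m : ℤ) • cnt g + cont L := by simp [cont]
        rw [this, mul_ite, mul_zero]
        have h2 : (cont L = i - (m : ℤ) • cnt g) ↔ (m : ℤ) • cnt g + cont L = i := by
          rw [eq_sub_iff_add_eq, add_comm]
        simp only [h2]
        simp [val]
    · rintro ⟨m, t⟩ _ ⟨m', t'⟩ _ e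
      simpa using e
    · rw [Finset.disjoint_left]
      intro L h1 h2
      obtain ⟨⟨m, t⟩, -, rfl⟩ := Finset.mem_image.1 h2
      rw [mem_LL N P (List.pairwise_cons.1 hP).2] at h1
      exact lt_irrefl _ (hlt _ (h1.1 (g, m) (by simp)).1)

theorem exists_full (M N : ℕ) : ∃ P : List (List (Fin M)), Good N P ∧
    ∀ w, w ∈ P ↔ IsLyndon w ∧ w.length ≤ N := by
  classical
  have hf : {w : List (Fin M) | IsLyndon w ∧ w.length ≤ N}.Finite :=
    (List.finite_length_le (Fin M) N).subset fun w hw => hw.2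
  have hm : ∀ w, w ∈ hf.toFinset.sort (· ≥ ·) ↔ IsLyndon w ∧ w.length ≤ N := by
    intro w; simp
  refine ⟨hf.toFinset.sort (· ≥ ·), ⟨fun a ha => (hm a).1 ha, ?_, fun d h1 h2 _ _ _ =>
    (hm d).2 ⟨h1, h2⟩⟩, hm⟩
  have h1 := Finset.pairwise_sort hf.toFinset (· ≥ ·)
  have h2 := Finset.sort_nodup hf.toFinset (· ≥ ·)
  exact (h1.and h2).imp fun h => lt_of_le_of_ne h.1 (Ne.symm h.2)

theorem AA_full {N : ℕ} (hN : 1 ≤ N) {P : List (List (Fin M))}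
    (hP : ∀ w, w ∈ P ↔ IsLyndon w ∧ w.length ≤ N) :
    AA P = Finset.univ.image (fun x : Fin M => [x]) := by
  ext w
  simp only [AA, Finset.mem_filter, List.mem_toFinset, Finset.mem_image, Finset.mem_univ, true_and]
  constructor
  · rintro ⟨h1, x, L, rfl, hL, h2⟩
    have h3 := ((hP _).1 h1).2
    rw [List.length_cons] at h3
    have : L = [] := List.eq_nil_iff_forall_not_mem.2 fun p hp => h2 p hp
      ((hP _).2 ⟨(hL.1 p hp).1, by have := length_le_fl L hL p hp; omega⟩)
    subst this
    exact ⟨x, rfl⟩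
  · rintro ⟨x, rfl⟩
    exact ⟨(hP _).2 ⟨isLyndon_singleton x, by simpa using hN⟩, x, [], rfl, by simp [Val], by simp⟩

theorem chain_iff (L : List (List (Fin M) × ℕ)) :
    L.Chain' (fun p q => List.Lex (· < ·) q.1 p.1) ↔ L.Pairwise (fun p q => q.1 < p.1) := by
  have : IsTrans (List (Fin M) × ℕ) (fun p q => q.1 < p.1) := ⟨fun a b c h1 h2 => lt_trans h2 h1⟩
  exact List.isChain_iff_pairwise (R := fun p q : List (Fin M) × ℕ => q.1 < p.1)

theorem SH_eq (E : List (Fin M) → FreeAlgebra k (Fin M))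
    (hE1 : ∀ x : Fin M, E [x] = FreeAlgebra.ι k x) (c : List (Fin M) → k) (hc1 : ∀ x, c [x] = 1)
    (N : ℕ) (P : List (List (Fin M))) (hP : ∀ w, w ∈ P ↔ IsLyndon w ∧ w.length ≤ N)
    (hmain : ∀ i : Fin M → ℤ, deg i ≤ N →
      (deg i : k) • HH k (fun w => c w • E w) N P i =
        ∑ a ∈ AA P, ((a.length : k) * c a) •
          (E a * HH k (fun w => c w • E w) N P (i - cnt a)))
    (SHm : (Fin M → ℕ) → FreeAlgebra k (Fin M))
    (hSH0 : SHm 0 = 1)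
    (hSHrec : ∀ i : Fin M → ℕ, i ≠ 0 →
      SHm i = ∑ x ∈ Finset.univ.filter fun x => 1 ≤ i x,
        FreeAlgebra.ι k x * SHm (Function.update i x (i x - 1))) :
    ∀ (n : ℕ) (i : Fin M → ℕ), ∑ x, i x = n → n ≤ N →
      SHm i = (n.factorial : k) • HH k (fun w => c w • E w) N P (fun x => (i x : ℤ))
  | 0, i, hi, _ => by
    obtain rfl : i = 0 := by
      ext x
      simpa using (Finset.sum_eq_zero_iff.1 hi) x (by simp)
    rw [hSH0]
    have := HH_zero (k := k) (fun w => c w • E w) N P (fun g hg => ((hP g).1 hg).1.1)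
    have h0 : (fun x => (((0 : Fin M → ℕ) x : ℕ) : ℤ)) = 0 := by ext; simp
    rw [h0, this]; simp
  | n+1, i, hi, hn => by
    have ih := SH_eq E hE1 c hc1 N P hP hmain SHm hSH0 hSHrec n
    have hi0 : i ≠ 0 := by rintro rfl; simp at hi
    have hdeg : deg (fun x => (i x : ℤ)) = (n+1 : ℕ) := by
      rw [deg, ← hi]; push_cast; rfl
    have h1 := hmain (fun x => (i x : ℤ)) (by rw [hdeg]; exact_mod_cast hn)
    rw [AA_full (by omega) hP, Finset.sum_image (by intro x _ y _ h; simpa using h), hdeg] at h1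
    rw [Nat.factorial_succ, mul_comm]
    push_cast at h1 ⊢
    rw [mul_smul, h1, hSHrec i hi0, Finset.smul_sum]
    rw [Finset.sum_filter]
    refine Finset.sum_congr rfl fun x _ => ?_
    simp only [List.length_singleton, Nat.cast_one, hc1, mul_one, one_smul, hE1]
    split_ifs with hx
    · rw [ih _ ?_ (by omega), mul_smul_comm]
      · congr 3
        ext y
        by_cases hy : y = x
        · subst hy; simp [cnt, hx]
        · simp [cnt, hy, Ne.symm hy]
      · have := Finset.sum_update_of_mem (Finset.mem_univ x) i (i x - 1)
        rw [this]
        have h2 := Finset.add_sum_erase Finset.univ i (Finset.mem_univ x)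
        rw [← Finset.sdiff_singleton_eq_erase] at h2
        omega
    · rw [HH_neg _ _ _ _ x, mul_zero, smul_zero]
      simp [cnt]; omega

end Fin

end LyndonAux

open LyndonAux

/-- Multinomial version (Corollary `cor:noncom-multinomial-thm`): expansion of the
multivariate shuffle type polynomials `SH_{i_M,…,i₁}` in the Lyndon–Shirshov basis.
The alphabet `{1 ≺ ⋯ ≺ M}` is `Fin M`; `E` is the Lyndon–Shirshov basis, `C` the
coefficient function, and `SHm` the multivariate shuffle type polynomial, all
characterized by the stated hypotheses. -/
theorem stmt_8 (k : Type*) [Field k] [CharZero k] (M : ℕ)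
    (E : List (Fin M) → FreeAlgebra k (Fin M))
    (hE1 : ∀ x : Fin M, E [x] = FreeAlgebra.ι k x)
    (hE2 : ∀ αL αR : List (Fin M), IsLyndon (αL ++ αR) → αL ≠ [] → IsLyndon αR →
      (∀ δ β' : List (Fin M), αL ++ αR = β' ++ δ → β' ≠ [] → IsLyndon δ →
        δ.length ≤ αR.length) →
      E (αL ++ αR) = E αL * E αR - E αR * E αL)
    (C : List (Fin M) → k)
    (hC1 : ∀ x : Fin M, C [x] = 1)
    (hC2 : ∀ (x : Fin M) (w : List (Fin M)) (L : List (List (Fin M) × ℕ)),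
      IsLyndon (x :: w) → w ≠ [] →
      (∀ p ∈ L, IsLyndon p.1 ∧ 1 ≤ p.2) →
      L.Chain' (fun p q => List.Lex (· < ·) q.1 p.1) →
      (L.map fun p => (List.replicate p.2 p.1).flatten).flatten = w →
      C (x :: w) =
        (w.length.factorial : k) /
            (L.map fun p => (p.1.length.factorial : k) ^ p.2 * (p.2.factorial : k)).prod *
          (L.map fun p => C p.1 ^ p.2).prod)
    (SHm : (Fin M → ℕ) → FreeAlgebra k (Fin M))
    (hSH0 : SHm 0 = 1)
    (hSHrec : ∀ i : Fin M → ℕ, i ≠ 0 →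
      SHm i = ∑ x ∈ Finset.univ.filter fun x => 1 ≤ i x,
        FreeAlgebra.ι k x * SHm (Function.update i x (i x - 1)))
    (i : Fin M → ℕ) :
    SHm i =
      ∑ᶠ L ∈ {L : List (List (Fin M) × ℕ) |
          (∀ p ∈ L, IsLyndon p.1 ∧ 1 ≤ p.2) ∧
          L.Chain' (fun p q => List.Lex (· < ·) q.1 p.1) ∧
          ∀ x : Fin M, (L.map fun p => p.2 * p.1.count x).sum = i x},
        (((∑ x, i x).factorial : k) / (L.map fun p => (p.2.factorial : k)).prod) •
          (L.map fun p => ((C p.1 / (p.1.length.factorial : k)) • E p.1) ^ p.2).prod := by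
  classical
  set c : List (Fin M) → k := fun w => C w / (w.length.factorial : k) with hcdef
  have hfac : ∀ n : ℕ, (n.factorial : k) ≠ 0 := fun n =>
    Nat.cast_ne_zero.2 (Nat.factorial_ne_zero n)
  have hc1 : ∀ x, c [x] = 1 := by intro x; simp [hcdef, hC1]
  have hwt : ∀ x L, Val L → IsLyndon (x :: fl L) →
      ((x :: fl L).length : k) * c (x :: fl L) = wt c L := by
    intro x L hL hly
    by_cases h0 : fl L = []
    · have hL0 : L = [] := by
        rcases L with _ | ⟨p, t⟩
        · rfl
        · exfalso
          have h1 := hL.1 p (by simp)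
          have h2 := length_le_fl _ hL p (by simp)
          rw [h0] at h2
          exact h1.1.1 (List.eq_nil_of_length_eq_zero (by simpa using h2))
      subst hL0
      rw [fl_nil, hc1]; simp [wt]
    · have h1 := hC2 x (fl L) L hly h0 hL.1 ((chain_iff L).2 hL.2) rfl
      have h2 : wt c L = (L.map fun p => C p.1 ^ p.2).prod /
          (L.map fun p => (p.1.length.factorial : k) ^ p.2 * (p.2.factorial : k)).prod := by
        clear h1 h0 hly hL
        induction L with
        | nil => simp [wt]
        | cons p t ih =>
          have e : wt c (p :: t) = c p.1 ^ p.2 / (p.2.factorial : k) * wt c t := by simp [wt]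
          rw [e, ih]
          simp only [List.map_cons, List.prod_cons, hcdef, div_pow, div_div]
          rw [div_mul_div_comm]
      rw [h2]
      simp only [hcdef]
      rw [h1, List.length_cons, Nat.factorial_succ]
      have h3 := hfac (fl L).length
      have h4 : (((fl L).length : k) + 1) ≠ 0 := by exact_mod_cast Nat.succ_ne_zero (fl L).length
      push_cast
      field_simp
  set N := ∑ x, i x with hN
  obtain ⟨P, hG, hP⟩ := exists_full M N
  have hmain := main_step E c hE2 hwt N P hG
  rw [SH_eq E hE1 c hc1 N P hP hmain SHm hSH0 hSHrec N i rfl le_rfl, HH_eq _ _ _ hG.2.1,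
    ← Finset.sum_filter, Finset.smul_sum]
  have hcont : ∀ L : List (List (Fin M) × ℕ), (cont L = fun x => (i x : ℤ)) ↔
      ∀ x : Fin M, (L.map fun p => p.2 * p.1.count x).sum = i x := by
    intro L
    have : ∀ x, cont L x = ((L.map fun p => p.2 * p.1.count x).sum : ℕ) := by
      intro x
      induction L with
      | nil => simp [cont]
      | cons p t ih =>
        have e : cont (p :: t) = (p.2 : ℤ) • cnt p.1 + cont t := by simp [cont]
        rw [e, Pi.add_apply, ih]; simp [cnt]
    rw [funext_iff]
    simp only [this]
    exact forall_congr' fun x => by norm_cast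
  have hset : {L : List (List (Fin M) × ℕ) |
          (∀ p ∈ L, IsLyndon p.1 ∧ 1 ≤ p.2) ∧
          L.Chain' (fun p q => List.Lex (· < ·) q.1 p.1) ∧
          ∀ x : Fin M, (L.map fun p => p.2 * p.1.count x).sum = i x} =
      ((LL N P).filter (fun L => cont L = fun x => (i x : ℤ)) : Finset _) := by
    ext L
    rw [Finset.coe_filter, Set.mem_ofPred_eq, Set.mem_ofPred_eq, mem_LL N P hG.2.1, hcont, chain_iff]
    constructor
    · rintro ⟨h1, h2, h3⟩
      refine ⟨⟨fun p hp => ?_, h2⟩, h3⟩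
      have hlen : p.2 * p.1.length ≤ N := by
        have e1 : ∑ x, p.1.count x = p.1.length := by
          have := deg_cnt p.1
          simp only [deg, cnt] at this
          exact_mod_cast this
        rw [← e1, Finset.mul_sum, hN]
        refine Finset.sum_le_sum fun x _ => ?_
        rw [← h3 x]
        exact List.single_le_sum (by simp) _ (List.mem_map.2 ⟨p, hp, rfl⟩)
      have hp1 := h1 p hp
      have hp2 := List.length_pos_iff.2 hp1.1.1
      exact ⟨(hP _).2 ⟨hp1.1, by nlinarith⟩, hp1.2, by nlinarith⟩
    · rintro ⟨⟨h1, h2⟩, h3⟩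
      exact ⟨fun p hp => ⟨((hP _).1 (h1 p hp).1).1, (h1 p hp).2.1⟩, h2, h3⟩
  rw [hset, finsum_mem_coe_finset]
  refine Finset.sum_congr rfl fun L hL => ?_
  rw [div_eq_mul_inv, mul_smul]
  congr 1
  rw [val]
  clear hL
  induction L with
  | nil => simp
  | cons p t ih =>
    simp only [List.map_cons, List.prod_cons]
    rw [ih, smul_mul_smul_comm, mul_inv]
end

section
/- Let A be a unital associative algebra, σ : A → A an algebra endomorphism, and x, y ∈ A. Then for every n ≥ 0, (x+y)^n = Σ_{k=0}^{n} Ŝ_{k,n−k}(1)·x^{n−k}. -/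
/-- The operator-valued shuffle type polynomials `Ŝ_{i,j}` built from two
operators `σ` and `D` on `A`: `Ŝ_{0,0} = id`, `Ŝ_{i,j} = σ∘Ŝ_{i,j−1} + D∘Ŝ_{i−1,j}`. -/
def Shat {A : Type*} [Ring A] (σ D : A → A) : ℕ → ℕ → A → A
  | 0, 0 => id
  | 0, j + 1 => σ ∘ Shat σ D 0 j
  | i + 1, 0 => D ∘ Shat σ D i 0
  | i + 1, j + 1 => σ ∘ Shat σ D (i + 1) j + D ∘ Shat σ D i (j + 1)

/-- Theorem B: noncommutative binomial formula via the operator shuffle type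
polynomials attached to the σ-twisted adjoint derivation `ad_σ x + y`. -/
theorem stmt_9 {k A : Type*} [CommRing k] [Ring A] [Algebra k A]
    (σ : A →ₐ[k] A) (x y : A) (n : ℕ) :
    (x + y) ^ n =
      ∑ m ∈ Finset.range (n + 1),
        Shat (⇑σ) (fun a => x * a - σ a * x + y * a) m (n - m) 1 * x ^ (n - m) := by
  set D : A → A := fun a => x * a - σ a * x + y * a with hD
  rw [← Finset.Nat.sum_antidiagonal_eq_sum_range_succ
    (fun i j => Shat (⇑σ) D i j 1 * x ^ j) n]
  induction n with
  | zero => simp [Shat]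
  | succ n ih =>
    rw [pow_succ', ih, Finset.mul_sum]
    let P : ℕ → ℕ → A := fun i j =>
      Nat.casesOn j 0 (fun j' => σ (Shat (⇑σ) D i j' 1) * x ^ (j' + 1))
    let Q : ℕ → ℕ → A := fun i j =>
      Nat.casesOn i 0 (fun i' => D (Shat (⇑σ) D i' j 1) * x ^ j)
    have h : ∀ p ∈ Finset.HasAntidiagonal.antidiagonal (n + 1),
        Shat (⇑σ) D p.1 p.2 1 * x ^ p.2 = P p.1 p.2 + Q p.1 p.2 := by
      rintro ⟨i, j⟩ hp
      rcases i with _ | i <;> rcases j with _ | j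
      · simp at hp
      · simp [P, Q, Shat]
      · simp [P, Q, Shat]
      · simp [P, Q, Shat, add_mul]
    rw [Finset.sum_congr rfl h, Finset.sum_add_distrib,
      Finset.Nat.sum_antidiagonal_succ' (f := fun p => P p.1 p.2),
      Finset.Nat.sum_antidiagonal_succ (f := fun p => Q p.1 p.2)]
    have hP : P (n + 1) 0 = 0 := rfl
    have hQ : Q 0 (n + 1) = 0 := rfl
    simp only [hP, hQ, zero_add]
    simp only [P, Q]
    rw [← Finset.sum_add_distrib]
    refine Finset.sum_congr rfl fun p _ => ?_
    simp only [hD, pow_succ']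
    noncomm_ring
end

section
/- Let A be a unital associative algebra, σ : A → A an algebra endomorphism, and x, y ∈ A. For m ≥ 0 define the operator D_m : A → A by D_m(a) = σ^m(x)·a − σ(a)·σ^m(x) + σ^m(y)·a. Then for all integers 1 ≤ k ≤ n, Ŝ_{k,n−k} = Σ_{0 ≤ m₁ ≤ m₂ ≤ ⋯ ≤ m_k ≤ n−k} D_{m₁}∘D_{m₂}∘⋯∘D_{m_k}∘σ^{n−k}. -/
/-- The composite `d_{m₁}∘⋯∘d_{m_K}∘s`. -/
def wordOp {A : Type*} (d : ℕ → A → A) {K : ℕ} (m : Fin K → ℕ) (s : A → A) : A → A :=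
  (List.ofFn fun i : Fin K => d (m i)).foldr (· ∘ ·) s

theorem wordOp_cons {A : Type*} (d : ℕ → A → A) {K : ℕ} (m : Fin K → ℕ) (c : ℕ) (s : A → A) :
    wordOp d (Fin.cons c m : Fin (K + 1) → ℕ) s = d c ∘ wordOp d m s := by
  simp [wordOp, List.ofFn_succ]

theorem wordOp_shift {A : Type*} (d : ℕ → A → A) (σ : A → A)
    (h : ∀ m, σ ∘ d m = d (m + 1) ∘ σ) {K : ℕ} (m : Fin K → ℕ) (s : A → A) :
    σ ∘ wordOp d m s = wordOp d (fun i => m i + 1) (σ ∘ s) := by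
  induction K with
  | zero => simp [wordOp]
  | succ K ih =>
    have e := ih (fun i => m i.succ)
    simp only [wordOp, List.ofFn_succ, List.foldr_cons] at e ⊢
    rw [← e, ← Function.comp_assoc, h, Function.comp_assoc]

/-- Weakly increasing sequences of length `K` bounded by `j`. -/
def monoSeq (K j : ℕ) : Finset (Fin K → ℕ) := by
  classical exact (Fintype.piFinset fun _ => Finset.range (j + 1)).filter Monotone

theorem mem_monoSeq {K j : ℕ} {m : Fin K → ℕ} :
    m ∈ monoSeq K j ↔ Monotone m ∧ ∀ i, m i ≤ j := by
  simp [monoSeq, Fintype.mem_piFinset, Nat.lt_succ_iff, and_comm]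

theorem monotone_cons_zero {K : ℕ} {m : Fin K → ℕ} (h : Monotone m) :
    Monotone (Fin.cons 0 m : Fin (K + 1) → ℕ) := by
  intro a b hab
  induction a using Fin.cases with
  | zero => simp
  | succ a =>
    induction b using Fin.cases with
    | zero => simp at hab
    | succ b => simpa using h (by simpa using hab)

theorem sum_zero_part {M : Type*} [AddCommMonoid M] (K j : ℕ) (f : (Fin (K + 1) → ℕ) → M) :
    ∑ m ∈ (monoSeq (K + 1) j).filter (fun m => m 0 = 0), f m
      = ∑ m ∈ monoSeq K j, f (Fin.cons 0 m) := by
  symm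
  refine Finset.sum_bij' (fun m _ => Fin.cons 0 m) (fun m _ => Fin.tail m) ?_ ?_ ?_ ?_ ?_
  · intro m hm
    rw [mem_monoSeq] at hm
    rw [Finset.mem_filter, mem_monoSeq]
    refine ⟨⟨monotone_cons_zero hm.1, fun i => ?_⟩, by simp⟩
    induction i using Fin.cases with
    | zero => simp
    | succ i => simpa using hm.2 i
  · intro m hm
    rw [Finset.mem_filter, mem_monoSeq] at hm
    rw [mem_monoSeq]
    exact ⟨fun a b hab => hm.1.1 (by simpa using hab), fun i => hm.1.2 _⟩
  · intro m hm
    simp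
  · intro m hm
    rw [Finset.mem_filter] at hm
    have := Fin.cons_self_tail m
    rwa [hm.2] at this
  · intro m hm
    rfl

theorem sum_pos_part {M : Type*} [AddCommMonoid M] (K j : ℕ) (f : (Fin (K + 1) → ℕ) → M) :
    ∑ m ∈ (monoSeq (K + 1) (j + 1)).filter (fun m => ¬ m 0 = 0), f m
      = ∑ m ∈ monoSeq (K + 1) j, f (fun i => m i + 1) := by
  symm
  refine Finset.sum_bij' (fun m _ => fun i => m i + 1) (fun m _ => fun i => m i - 1)
    ?_ ?_ ?_ ?_ ?_
  · intro m hm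
    rw [mem_monoSeq] at hm
    rw [Finset.mem_filter, mem_monoSeq]
    exact ⟨⟨fun a b hab => Nat.succ_le_succ (hm.1 hab), fun i => Nat.succ_le_succ (hm.2 i)⟩,
      by simp⟩
  · intro m hm
    rw [Finset.mem_filter, mem_monoSeq] at hm
    rw [mem_monoSeq]
    refine ⟨fun a b hab => Nat.sub_le_sub_right (hm.1.1 hab) 1, fun i => ?_⟩
    have := hm.1.2 i
    show m i - 1 ≤ j
    omega
  · intro m hm
    simp
  · intro m hm
    rw [Finset.mem_filter, mem_monoSeq] at hm
    funext i
    have := hm.1.1 (Fin.zero_le i)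
    have := hm.2
    show m i - 1 + 1 = m i
    omega
  · intro m hm
    rfl

theorem comp_sum_add {A ι : Type*} [Ring A] (g : A → A) (h0 : g 0 = 0)
    (hg : ∀ a b, g (a + b) = g a + g b) (s : Finset ι) (f : ι → A → A) :
    g ∘ (∑ i ∈ s, f i) = ∑ i ∈ s, g ∘ f i := by
  funext a
  simp only [Function.comp_apply, Finset.sum_apply]
  exact map_sum (AddMonoidHom.mk ⟨g, h0⟩ hg) (fun i => f i a) s

theorem Shat_eq_sum {A : Type*} [Ring A] (σ : A → A) (d : ℕ → A → A)
    (h : ∀ m, σ ∘ d m = d (m + 1) ∘ σ) (s0 : σ 0 = 0) (sa : ∀ a b, σ (a + b) = σ a + σ b)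
    (d0 : d 0 0 = 0) (da : ∀ a b, d 0 (a + b) = d 0 a + d 0 b) (K j : ℕ) :
    Shat σ (d 0) K j = ∑ m ∈ monoSeq K j, wordOp d m (σ^[j]) := by
  induction K generalizing j with
  | zero =>
    have e : monoSeq 0 j = {Fin.elim0} := by
      ext m
      rw [mem_monoSeq, Finset.mem_singleton]
      exact ⟨fun _ => Subsingleton.elim _ _, fun _ => ⟨fun a => a.elim0, fun a => a.elim0⟩⟩
    rw [e, Finset.sum_singleton]
    have w : wordOp d (Fin.elim0 : Fin 0 → ℕ) (σ^[j]) = σ^[j] := by simp [wordOp]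
    rw [w]
    induction j with
    | zero => simp [Shat]
    | succ j ih =>
      rw [Shat, Function.iterate_succ', ih]
      · ext m
        rw [mem_monoSeq, Finset.mem_singleton]
        exact ⟨fun _ => Subsingleton.elim _ _, fun _ => ⟨fun a => a.elim0, fun a => a.elim0⟩⟩
      · simp [wordOp]
  | succ K ih =>
    have z : ∀ j, ∑ m ∈ (monoSeq (K + 1) j).filter (fun m => m 0 = 0), wordOp d m (σ^[j])
        = d 0 ∘ Shat σ (d 0) K j := by
      intro j
      rw [sum_zero_part, ih, comp_sum_add _ d0 da]
      exact Finset.sum_congr rfl fun m _ => wordOp_cons d m 0 _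
    induction j with
    | zero =>
      rw [Shat, ← z, Finset.filter_true_of_mem]
      intro m hm
      rw [mem_monoSeq] at hm
      exact Nat.le_zero.mp (hm.2 0)
    | succ j ihj =>
      rw [Shat, ← Finset.sum_filter_add_sum_filter_not _ (fun m => m 0 = 0), z, sum_pos_part,
        add_comm, ihj, comp_sum_add _ s0 sa]
      congr 1
      refine Finset.sum_congr rfl fun m _ => ?_
      rw [wordOp_shift d σ h, Function.iterate_succ']

/-- `Ŝ_{k,n−k} = Σ_{0 ≤ m₁ ≤ ⋯ ≤ m_k ≤ n−k} D_{m₁}∘⋯∘D_{m_k}∘σ^{n−k}`, where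
`D_m(a) = σ^m(x)·a − σ(a)·σ^m(x) + σ^m(y)·a`. -/
theorem stmt_10 {k A : Type*} [CommRing k] [Ring A] [Algebra k A]
    (σ : A →ₐ[k] A) (x y : A) (n K : ℕ) (h1 : 1 ≤ K) (h2 : K ≤ n) :
    Shat (⇑σ) (fun a => x * a - σ a * x + y * a) K (n - K) =
      ∑ᶠ m ∈ {m : Fin K → ℕ | Monotone m ∧ ∀ i, m i ≤ n - K},
        (List.ofFn fun i : Fin K =>
            fun a => (⇑σ)^[m i] x * a - σ a * (⇑σ)^[m i] x + (⇑σ)^[m i] y * a).foldr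
          (· ∘ ·) ((⇑σ)^[n - K]) := by
  have key := Shat_eq_sum (⇑σ)
    (fun m a => (⇑σ)^[m] x * a - σ a * (⇑σ)^[m] x + (⇑σ)^[m] y * a)
    (by
      intro m
      funext a
      simp only [Function.comp_apply, map_add, map_sub, map_mul, Function.iterate_succ_apply'])
    (map_zero σ) (map_add σ) (by simp)
    (by
      intro a b
      simp only [map_add, mul_add, add_mul]
      abel) K (n - K)
  have e : {m : Fin K → ℕ | Monotone m ∧ ∀ i, m i ≤ n - K}
      = (↑(monoSeq K (n - K)) : Set (Fin K → ℕ)) := by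
    ext m
    rw [Finset.mem_coe, mem_monoSeq, Set.mem_setOf_eq]
  rw [e, finsum_mem_coe_finset]
  exact key
end

section
/- Let A be a unital associative algebra and x, y ∈ A. Then for every n ≥ 0, (x+y)^n = Σ_{k=0}^{n} binom(n,k)·B_k·x^{n−k} and (x+y)^n = Σ_{k=0}^{n} binom(n,k)·x^{n−k}·B*_k. -/
/-- The Bell differential polynomials: `B₀ = 1`, `B_{k+1} = [x, B_k] + y·B_k`. -/
def Bell {A : Type*} [Ring A] (x y : A) : ℕ → A
  | 0 => 1
  | n + 1 => x * Bell x y n - Bell x y n * x + y * Bell x y n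

/-- The dual Bell differential polynomials: `B*₀ = 1`, `B*_{k+1} = [B*_k, x] + B*_k·y`. -/
def BellStar {A : Type*} [Ring A] (x y : A) : ℕ → A
  | 0 => 1
  | n + 1 => BellStar x y n * x - x * BellStar x y n + BellStar x y n * y

theorem aux_binom {A : Type*} [Ring A] (f : ℕ → ℕ → A) (n : ℕ) :
    ∑ m ∈ Finset.range (n + 1 + 1), (n + 1).choose m • f m (n + 1 - m) =
    ∑ m ∈ Finset.range (n + 1), n.choose m • (f m (n - m + 1) + f (m + 1) (n - m)) := by
  have h1 := Finset.Nat.sum_antidiagonal_eq_sum_range_succ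
    (fun i j => (n + 1).choose i • f i j) (n + 1)
  have h2 := Finset.Nat.sum_antidiagonal_eq_sum_range_succ
    (fun i j => n.choose i • (f i (j + 1) + f (i + 1) j)) n
  simp only [Nat.succ_eq_add_one] at h1 h2
  rw [← h1, ← h2, Finset.sum_antidiagonal_choose_succ_nsmul, ← Finset.sum_add_distrib]
  refine Finset.sum_congr rfl fun ij hij => ?_
  rw [Finset.HasAntidiagonal.mem_antidiagonal] at hij
  rw [smul_add, Nat.choose_symm_of_eq_add (n := n) (a := ij.2) (b := ij.1) (by omega)]

/-- Schimming–Rida binomial formula via Bell differential polynomials. -/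
theorem stmt_11 {A : Type*} [Ring A] (x y : A) (n : ℕ) :
    (x + y) ^ n = ∑ m ∈ Finset.range (n + 1), n.choose m • (Bell x y m * x ^ (n - m)) ∧
    (x + y) ^ n = ∑ m ∈ Finset.range (n + 1), n.choose m • (x ^ (n - m) * BellStar x y m) := by
  constructor
  · induction n with
    | zero => simp [Bell]
    | succ n ih =>
      rw [aux_binom (fun i j => Bell x y i * x ^ j) n, pow_succ', ih, Finset.mul_sum]
      refine Finset.sum_congr rfl fun m _ => ?_
      rw [mul_smul_comm]
      congr 1
      simp only [Bell, pow_succ']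
      noncomm_ring
  · induction n with
    | zero => simp [BellStar]
    | succ n ih =>
      rw [aux_binom (fun i j => x ^ j * BellStar x y i) n, pow_succ, ih, Finset.sum_mul]
      refine Finset.sum_congr rfl fun m _ => ?_
      rw [smul_mul_assoc]
      congr 1
      simp only [BellStar, pow_succ]
      noncomm_ring
end

section
/- Let k be a commutative ring, q ∈ k, A a unital associative k-algebra and x, y ∈ A. Then for every n ≥ 0, (x+y)^n = Σ_{k=0}^{n} binom(n,k)_q · B̂_{k,q} · x^{n−k}. -/
/-- The q-integer `(m)_q = 1 + q + ⋯ + q^{m−1}`. -/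
def qInt {k : Type*} [CommRing k] (q : k) (m : ℕ) : k := ∑ i ∈ Finset.range m, q ^ i

/-- The q-factorial `(m)_q! = (1)_q (2)_q ⋯ (m)_q`. -/
def qFact {k : Type*} [CommRing k] (q : k) : ℕ → k
  | 0 => 1
  | m + 1 => qFact q m * qInt q (m + 1)

/-- The Gaussian binomial coefficients: `binom(n,0)_q = 1`, `binom(0,k+1)_q = 0`,
`binom(n,k)_q = binom(n−1,k−1)_q + q^k binom(n−1,k)_q`. -/
def qBinom {k : Type*} [CommRing k] (q : k) : ℕ → ℕ → k
  | _, 0 => 1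
  | 0, _ + 1 => 0
  | n + 1, m + 1 => qBinom q n m + q ^ (m + 1) * qBinom q n (m + 1)

/-- The partial q-Bell differential polynomials `B_{n,k}`:
`B_{0,0} = 1`, `B_{n,0} = 0` for `n > 0`, `B_{n,k} = 0` for `k > n`, and
`B_{n,k} = y·B_{n−1,k−1} + x·B_{n−1,k} − q^{n−1}·B_{n−1,k}·x`. -/
def qBellP {k A : Type*} [CommRing k] [Ring A] [Algebra k A] (q : k) (x y : A) :
    ℕ → ℕ → A
  | 0, 0 => 1
  | _ + 1, 0 => 0
  | 0, _ + 1 => 0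
  | n + 1, m + 1 =>
      y * qBellP q x y n m + x * qBellP q x y n (m + 1)
        - q ^ n • (qBellP q x y n (m + 1) * x)

theorem qBinom_zero_of_lt {k : Type*} [CommRing k] (q : k) (n : ℕ) :
    ∀ m, n < m → qBinom q n m = 0 := by
  induction n with
  | zero => intro m hm; obtain ⟨m, rfl⟩ := Nat.exists_eq_succ_of_ne_zero hm.ne'; simp [qBinom]
  | succ n ih =>
    intro m hm
    obtain ⟨m, rfl⟩ := Nat.exists_eq_succ_of_ne_zero (show m ≠ 0 by omega)
    simp [qBinom, ih m (by omega), ih (m + 1) (by omega)]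

theorem qBinom_zero_right {k : Type*} [CommRing k] (q : k) (n : ℕ) : qBinom q n 0 = 1 := by
  cases n <;> simp [qBinom]

theorem qBellP_zero_of_lt {k A : Type*} [CommRing k] [Ring A] [Algebra k A] (q : k) (x y : A)
    (n : ℕ) : ∀ m, n < m → qBellP q x y n m = 0 := by
  induction n with
  | zero => intro m hm; obtain ⟨m, rfl⟩ := Nat.exists_eq_succ_of_ne_zero hm.ne'; simp [qBellP]
  | succ n ih =>
    intro m hm
    obtain ⟨m, rfl⟩ := Nat.exists_eq_succ_of_ne_zero (show m ≠ 0 by omega)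
    simp [qBellP, ih m (by omega), ih (m + 1) (by omega)]

theorem qBell_rec {k A : Type*} [CommRing k] [Ring A] [Algebra k A] (q : k) (x y : A) (n : ℕ) :
    (x + y) * (∑ j ∈ Finset.range (n + 1), qBellP q x y n j) =
      (∑ j ∈ Finset.range (n + 1 + 1), qBellP q x y (n + 1) j) +
        q ^ n • ((∑ j ∈ Finset.range (n + 1), qBellP q x y n j) * x) := by
  have h1 : ∑ j ∈ Finset.range (n + 1), qBellP q x y n j =
      ∑ j ∈ Finset.range (n + 1), qBellP q x y n (j + 1) + qBellP q x y n 0 := by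
    rw [← Finset.sum_range_succ', Finset.sum_range_succ _ (n + 1),
      qBellP_zero_of_lt q x y n (n + 1) (by omega), add_zero]
  have h2 : x * qBellP q x y n 0 = q ^ n • (qBellP q x y n 0 * x) := by
    cases n <;> simp [qBellP]
  rw [Finset.sum_range_succ' _ (n + 1)]
  simp only [qBellP, Finset.sum_sub_distrib, Finset.sum_add_distrib, ← Finset.mul_sum,
    ← Finset.smul_sum, ← Finset.sum_mul]
  generalize ∑ j ∈ Finset.range (n + 1), qBellP q x y n (j + 1) = T at *
  rw [h1]
  simp only [add_mul, mul_add, smul_add, h2]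
  abel

/-- Binomial formula via the q-Bell differential polynomials
`B̂_{k,q} = Σ_{j=0}^{k} B_{k,j}`. -/
theorem stmt_12 {k A : Type*} [CommRing k] [Ring A] [Algebra k A]
    (q : k) (x y : A) (n : ℕ) :
    (x + y) ^ n =
      ∑ m ∈ Finset.range (n + 1),
        qBinom q n m •
          ((∑ j ∈ Finset.range (m + 1), qBellP q x y m j) * x ^ (n - m)) := by
  induction n with
  | zero => simp [qBinom, qBellP]
  | succ n ih =>
    rw [pow_succ', ih, Finset.mul_sum, Finset.sum_range_succ' _ (n + 1)]
    have e : ∀ m ∈ Finset.range (n + 1), (x + y) * (qBinom q n m •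
          ((∑ j ∈ Finset.range (m + 1), qBellP q x y m j) * x ^ (n - m))) =
        qBinom q n m •
          ((∑ j ∈ Finset.range (m + 1 + 1), qBellP q x y (m + 1) j) * x ^ (n - m)) +
        (q ^ m * qBinom q n m) •
          ((∑ j ∈ Finset.range (m + 1), qBellP q x y m j) * x ^ (n + 1 - m)) := by
      intro m hm
      have hm' : n + 1 - m = (n - m) + 1 := by
        have := Finset.mem_range.1 hm
        omega
      rw [mul_smul_comm, ← mul_assoc, qBell_rec q, add_mul, smul_add, hm', pow_succ' x,
        smul_mul_assoc, smul_smul, mul_assoc, mul_comm (q ^ m)]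
    have h3 := Finset.sum_range_succ (fun m => (q ^ m * qBinom q n m) •
          ((∑ j ∈ Finset.range (m + 1), qBellP q x y m j) * x ^ (n + 1 - m))) (n + 1)
    rw [qBinom_zero_of_lt q n (n + 1) (by omega), mul_zero, zero_smul, add_zero] at h3
    rw [Finset.sum_congr rfl e, Finset.sum_add_distrib, ← h3, Finset.sum_range_succ' _ (n + 1)]
    simp only [qBinom, add_smul, Finset.sum_add_distrib, Nat.add_sub_add_right, pow_zero,
      one_mul, qBinom_zero_right, add_assoc]
end

section
/- Let k be a commutative ring, q ∈ k, A a unital associative k-algebra and x, y ∈ A. Then for all integers 1 ≤ k ≤ n, the partial q-Bell differential polynomials satisfy B_{n,k} = Σ_{ℓ=k−1}^{n−1} binom(n−1,ℓ)_q · B_{ℓ,k−1} · y^{(n−1−ℓ)}. -/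
/-- `y^{(0)} = y`, `y^{(m)} = x·y^{(m−1)} − q^m·y^{(m−1)}·x`. -/
def yd {k A : Type*} [CommRing k] [Ring A] [Algebra k A] (q : k) (x y : A) : ℕ → A
  | 0 => y
  | m + 1 => x * yd q x y m - q ^ (m + 1) • (yd q x y m * x)

theorem qBinom_gt {k : Type*} [CommRing k] (q : k) (n : ℕ) :
    ∀ l, n < l → qBinom q n l = 0 := by
  induction n with
  | zero =>
    intro l hl
    obtain ⟨l, rfl⟩ : ∃ j, l = j + 1 := ⟨l - 1, by omega⟩
    rw [qBinom]
  | succ n ih =>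
    intro l hl
    obtain ⟨l, rfl⟩ : ∃ j, l = j + 1 := ⟨l - 1, by omega⟩
    rw [qBinom, ih l (by omega), ih (l + 1) (by omega)]
    simp

theorem qBellP_gt {k A : Type*} [CommRing k] [Ring A] [Algebra k A] (q : k) (x y : A) (n : ℕ) :
    ∀ l, n < l → qBellP q x y n l = 0 := by
  induction n with
  | zero =>
    intro l hl
    obtain ⟨l, rfl⟩ : ∃ j, l = j + 1 := ⟨l - 1, by omega⟩
    rw [qBellP]
  | succ n ih =>
    intro l hl
    obtain ⟨l, rfl⟩ : ∃ j, l = j + 1 := ⟨l - 1, by omega⟩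
    rw [qBellP, ih l (by omega), ih (l + 1) (by omega)]
    simp

theorem sum_pascal {k A : Type*} [CommRing k] [Ring A] [Algebra k A] (q : k) (n : ℕ) (F : ℕ → A) :
    ∑ l ∈ Finset.range (n + 2), qBinom q (n + 1) l • F l =
      ∑ l ∈ Finset.range (n + 1), qBinom q n l • F (l + 1)
      + ∑ l ∈ Finset.range (n + 1), (q ^ l * qBinom q n l) • F l := by
  have h : ∑ l ∈ Finset.range (n + 1), (q ^ l * qBinom q n l) • F l
      = ∑ l ∈ Finset.range (n + 2), (q ^ l * qBinom q n l) • F l := by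
    rw [Finset.sum_range_succ _ (n + 1), qBinom_gt q n (n + 1) (by omega)]
    simp
  rw [h, Finset.sum_range_succ', Finset.sum_range_succ' _ (n + 1), ← add_assoc,
    ← Finset.sum_add_distrib]
  congr 1
  · refine Finset.sum_congr rfl fun l _ => ?_
    rw [qBinom, add_smul]
  · simp [qBinom_zero_right]

theorem leib {k A : Type*} [CommRing k] [Ring A] [Algebra k A] (q : k) (x u v : A) (l j : ℕ) :
    x * (u * v) - q ^ (l + j) • ((u * v) * x) =
      (x * u - q ^ l • (u * x)) * v + q ^ l • (u * (x * v - q ^ j • (v * x))) := by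
  simp only [sub_mul, mul_sub, smul_sub, smul_mul_assoc, mul_smul_comm, smul_smul, pow_add,
    mul_assoc]
  abel

theorem main_rec {k A : Type*} [CommRing k] [Ring A] [Algebra k A] (q : k) (x y : A) (n : ℕ) :
    ∀ m, qBellP q x y (n + 1) (m + 1) =
      ∑ l ∈ Finset.range (n + 1),
        qBinom q n l • (qBellP q x y l m * yd q x y (n - l)) := by
  induction n with
  | zero =>
    intro m
    cases m <;> simp [qBellP, qBinom, yd]
  | succ n ih =>
    intro m
    rw [sum_pascal q n (fun l => qBellP q x y l m * yd q x y (n + 1 - l)), qBellP]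
    have key : x * qBellP q x y (n + 1) (m + 1) - q ^ (n + 1) • (qBellP q x y (n + 1) (m + 1) * x)
        = ∑ l ∈ Finset.range (n + 1), qBinom q n l •
            ((x * qBellP q x y l m - q ^ l • (qBellP q x y l m * x)) * yd q x y (n - l))
          + ∑ l ∈ Finset.range (n + 1), (q ^ l * qBinom q n l) •
            (qBellP q x y l m * yd q x y (n + 1 - l)) := by
      rw [ih m, Finset.mul_sum, Finset.sum_mul, Finset.smul_sum, ← Finset.sum_sub_distrib,
        ← Finset.sum_add_distrib]
      refine Finset.sum_congr rfl fun l hl => ?_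
      have hl' : l ≤ n := by simpa [Nat.lt_succ_iff] using hl
      have e := leib q x (qBellP q x y l m) (yd q x y (n - l)) l (n - l + 1)
      rw [show l + (n - l + 1) = n + 1 by omega] at e
      rw [show n + 1 - l = n - l + 1 by omega, yd, mul_comm (q ^ l), mul_smul, ← smul_add, ← e,
        mul_smul_comm, smul_mul_assoc, smul_comm (q ^ (n + 1)), smul_sub]
    have key2 : y * qBellP q x y (n + 1) m + ∑ l ∈ Finset.range (n + 1), qBinom q n l •
            ((x * qBellP q x y l m - q ^ l • (qBellP q x y l m * x)) * yd q x y (n - l))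
        = ∑ l ∈ Finset.range (n + 1), qBinom q n l •
            (qBellP q x y (l + 1) m * yd q x y (n + 1 - (l + 1))) := by
      cases m with
      | zero =>
        rw [qBellP, mul_zero, zero_add]
        refine Finset.sum_congr rfl fun l _ => ?_
        cases l <;> simp [qBellP]
      | succ m =>
        rw [ih m, Finset.mul_sum, ← Finset.sum_add_distrib]
        refine Finset.sum_congr rfl fun l _ => ?_
        rw [qBellP, Nat.add_sub_add_right, mul_smul_comm, ← smul_add, ← mul_assoc, ← add_mul,
          add_sub_assoc]
    rw [add_sub_assoc, key, ← add_assoc, key2]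

/-- Recursion for the partial q-Bell differential polynomials:
`B_{n,k} = Σ_{ℓ=k−1}^{n−1} binom(n−1,ℓ)_q · B_{ℓ,k−1} · y^{(n−1−ℓ)}`. -/
theorem stmt_13 {k A : Type*} [CommRing k] [Ring A] [Algebra k A]
    (q : k) (x y : A) (n m : ℕ) (h1 : 1 ≤ m) (h2 : m ≤ n) :
    qBellP q x y n m =
      ∑ ℓ ∈ Finset.Icc (m - 1) (n - 1),
        qBinom q (n - 1) ℓ • (qBellP q x y ℓ (m - 1) * yd q x y (n - 1 - ℓ)) := by
  obtain ⟨m, rfl⟩ : ∃ j, m = j + 1 := ⟨m - 1, by omega⟩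
  obtain ⟨n, rfl⟩ : ∃ j, n = j + 1 := ⟨n - 1, by omega⟩
  simp only [Nat.add_sub_cancel]
  rw [main_rec]
  symm
  refine Finset.sum_subset (fun l hl => ?_) (fun l hl hl' => ?_)
  · simp only [Finset.mem_Icc, Finset.mem_range] at *
    omega
  · simp only [Finset.mem_Icc, Finset.mem_range] at *
    rw [qBellP_gt q x y l m (by omega)]
    simp
end

section
/- Let k be a field, q ∈ k and n ≥ 1 an integer such that (m)_q ≠ 0 for all 1 ≤ m ≤ n. Let A be a unital associative k-algebra and let d₁, d₂, d₃, … ∈ A satisfy d_v·d_u = q^v·d_u·d_v for all integers 1 ≤ u < v. Define B_{0,0} = 1, B_{a,b} = 0 if b = 0 < a or b > a, and B_{a,b} = Σ_{ℓ=b−1}^{a−1} binom(a−1,ℓ)_q·B_{ℓ,b−1}·d_{a−ℓ} for 1 ≤ b ≤ a. Then for every 1 ≤ k ≤ n, B_{n,k} = Σ ((n)_q! / ∏_{i=1}^{n−k+1} ((i)_q!)^{t_i}·(t_i)_{q^i}!) · d₁^{t₁}·d₂^{t₂}⋯d_{n−k+1}^{t_{n−k+1}}, where the sum is over all (t₁,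 …, t_{n−k+1}) ∈ ℕ^{n−k+1} with t₁ + t₂ + ⋯ + t_{n−k+1} = k and t₁ + 2t₂ + ⋯ + (n−k+1)t_{n−k+1} = n (under the hypothesis on q all the denominators are nonzero elements of k). -/
theorem qInt_add {k : Type*} [CommRing k] (q : k) (a b : ℕ) :
    qInt q (a + b) = qInt q b + q ^ b * qInt q a := by
  unfold qInt
  rw [add_comm a b, Finset.sum_range_add, Finset.mul_sum]
  simp [pow_add]

theorem qInt_mul {k : Type*} [CommRing k] (q : k) (i t : ℕ) :
    qInt q (i * t) = qInt q i * qInt (q ^ i) t := by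
  induction t with
  | zero => simp [qInt]
  | succ t ih =>
    have h : qInt (q ^ i) (t + 1) = qInt (q ^ i) t + (q ^ i) ^ t := by
      unfold qInt
      rw [Finset.sum_range_succ]
    rw [Nat.mul_succ, add_comm, qInt_add, ih, h, ← pow_mul]
    ring

theorem qBinom_self_lt {k : Type*} [CommRing k] (q : k) (n m : ℕ) (h : n < m) :
    qBinom q n m = 0 := by
  induction n generalizing m with
  | zero => cases m with
    | zero => omega
    | succ m => simp [qBinom]
  | succ n ih => cases m with
    | zero => omega
    | succ m => simp [qBinom, ih m (by omega), ih (m+1) (by omega)]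

theorem qBinom_fact {k : Type*} [CommRing k] (q : k) (n l m : ℕ) (h : m + l = n) :
    qBinom q n l * (qFact q l * qFact q m) = qFact q n := by
  induction n generalizing l m with
  | zero =>
    obtain rfl : l = 0 := by omega
    obtain rfl : m = 0 := by omega
    simp [qBinom, qFact]
  | succ n ih =>
    cases l with
    | zero =>
      obtain rfl : m = n + 1 := by omega
      simp [qBinom, qFact]
    | succ l =>
      have h1 := ih l m (by omega)
      have e : qFact q (n + 1) = qFact q n * qInt q (m + (l + 1)) := by
        rw [h]; rfl
      rw [e, qInt_add]
      cases m with
      | zero =>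
        rw [qBinom, qBinom_self_lt q n (l+1) (by omega), ← h1]
        simp [qFact, qInt]
        ring
      | succ m =>
        have h2 := ih (l+1) m (by omega)
        have e1 : qFact q (l+1) = qFact q l * qInt q (l+1) := rfl
        have e2 : qFact q (m+1) = qFact q m * qInt q (m+1) := rfl
        rw [qBinom]
        calc _ = (qBinom q n l * (qFact q l * qFact q (m+1))) * qInt q (l+1)
              + q ^ (l+1) * qInt q (m+1) * (qBinom q n (l+1) * (qFact q (l+1) * qFact q m)) := by
                rw [e1, e2]; ring
          _ = _ := by rw [h1, h2]; ring

theorem qInt_sum {k : Type*} [CommRing k] (q : k) (N : ℕ) (w : Fin N → ℕ) :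
    ∑ j, q ^ (∑ v, if j < v then w v else 0) * qInt q (w j) = qInt q (∑ j, w j) := by
  induction N with
  | zero => simp [qInt]
  | succ N ih =>
    rw [Fin.sum_univ_castSucc, Fin.sum_univ_castSucc w, qInt_add, ← ih, Finset.mul_sum]
    have h0 : (∑ v, if Fin.last N < v then w v else 0) = 0 :=
      Finset.sum_eq_zero fun v _ => if_neg (not_lt.mpr (Fin.le_last v))
    rw [h0, pow_zero, one_mul, add_comm]
    congr 1
    refine Finset.sum_congr rfl fun j _ => ?_
    rw [Fin.sum_univ_castSucc]
    simp [Fin.castSucc_lt_last, pow_add]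
    ring

theorem pow_comm_q {k A : Type*} [Field k] [Ring A] [Algebra k A] (c : k) (x y : A)
    (h : y * x = c • (x * y)) (t : ℕ) : y ^ t * x = c ^ t • (x * y ^ t) := by
  induction t with
  | zero => simp
  | succ t ih =>
    rw [pow_succ, mul_assoc, h, mul_smul_comm, ← mul_assoc, ih, smul_mul_assoc, smul_smul,
      mul_assoc, pow_succ, mul_comm]

theorem monom_mul {k A : Type*} [Field k] [Ring A] [Algebra k A] (q : k) (d : ℕ → A)
    (hd : ∀ u v : ℕ, 1 ≤ u → u < v → d v * d u = q ^ v • (d u * d v))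
    (N : ℕ) (t : Fin N → ℕ) (j : Fin N) :
    (List.ofFn fun i : Fin N => d (i.val + 1) ^ t i).prod * d (j.val + 1) =
      q ^ (∑ v, if j < v then (v.val + 1) * t v else 0) •
      (List.ofFn fun i : Fin N => d (i.val + 1) ^ (t i + if i = j then 1 else 0)).prod := by
  induction N with
  | zero => exact j.elim0
  | succ N ih =>
    rw [List.ofFn_succ', List.ofFn_succ', List.concat_eq_append, List.concat_eq_append,
      List.prod_append, List.prod_append, List.prod_singleton, List.prod_singleton]
    rw [Fin.sum_univ_castSucc]
    induction j using Fin.lastCases with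
    | last =>
      have h0 : ∀ v : Fin N, ¬ (Fin.last N < v.castSucc) := fun v => not_lt.mpr (Fin.le_last _)
      have h1 : ∀ v : Fin N, ¬ (v.castSucc = Fin.last N) := fun v => (Fin.castSucc_lt_last v).ne
      simp [h0, h1, pow_succ, mul_assoc]
    | cast j =>
      have h1 : ¬ (Fin.last N = j.castSucc) := (Fin.castSucc_lt_last j).ne'
      rw [mul_assoc]
      have := pow_comm_q _ _ _ (hd (j.val+1) (N+1) (by omega) (by omega)) (t (Fin.last N))
      simp only [Fin.val_last, Fin.val_castSucc]
      rw [this, mul_smul_comm, ← mul_assoc, ih (fun i => t i.castSucc) j, smul_mul_assoc,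
        smul_smul]
      rw [← pow_mul, ← pow_add, add_comm]
      simp [h1, Fin.castSucc_lt_last]

/-- index set -/
def bellS (N a b : ℕ) : Finset (Fin N → ℕ) :=
  (Finset.piAntidiag Finset.univ b).filter fun t => (∑ i, (i.val + 1) * t i) = a

theorem mem_bellS (N a b : ℕ) (t : Fin N → ℕ) :
    t ∈ bellS N a b ↔ (∑ i, t i) = b ∧ (∑ i, (i.val + 1) * t i) = a := by
  simp [bellS]

theorem sum_add_single (N : ℕ) (t : Fin N → ℕ) (w : Fin N → ℕ) (j : Fin N) :
    ∑ i, w i * (t i + if i = j then 1 else 0) = (∑ i, w i * t i) + w j := by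
  simp [mul_add, Finset.sum_add_distrib]

theorem sum_add_single' (N : ℕ) (t : Fin N → ℕ) (j : Fin N) :
    ∑ i, (t i + if i = j then 1 else 0) = (∑ i, t i) + 1 := by
  simp [Finset.sum_add_distrib]

/-- denominator -/
def bellD {k : Type*} [Field k] (q : k) (N : ℕ) (t : Fin N → ℕ) : k :=
  ∏ i : Fin N, (qFact q (i.val + 1) ^ t i * qFact (q ^ (i.val + 1)) (t i))

theorem bellD_add {k : Type*} [Field k] (q : k) (N : ℕ) (t : Fin N → ℕ) (j : Fin N) :
    bellD q N (fun i => t i + if i = j then 1 else 0) =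
      bellD q N t * (qFact q (j.val + 1) * qInt (q ^ (j.val + 1)) (t j + 1)) := by
  unfold bellD
  rw [← Finset.mul_prod_erase _ _ (Finset.mem_univ j), 
    ← Finset.mul_prod_erase Finset.univ (fun i : Fin N => 
      (qFact q (i.val + 1) ^ t i * qFact (q ^ (i.val + 1)) (t i))) (Finset.mem_univ j)]
  have : ∀ i ∈ Finset.univ.erase j, (qFact q (i.val + 1) ^ (t i + if i = j then 1 else 0) *
      qFact (q ^ (i.val + 1)) (t i + if i = j then 1 else 0)) =
      (qFact q (i.val + 1) ^ t i * qFact (q ^ (i.val + 1)) (t i)) := by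
    intro i hi
    simp [Finset.ne_of_mem_erase hi]
  rw [Finset.prod_congr rfl this]
  simp [qFact, pow_succ]
  ring

theorem qFact_ne {k : Type*} [Field k] (q : k) (m : ℕ)
    (h : ∀ i, 1 ≤ i → i ≤ m → qInt q i ≠ 0) : qFact q m ≠ 0 := by
  induction m with
  | zero => simp [qFact]
  | succ m ih =>
    exact mul_ne_zero (ih fun i h1 h2 => h i h1 (by omega)) (h _ (by omega) le_rfl)

theorem le_weight (N : ℕ) (t : Fin N → ℕ) (j : Fin N) :
    (j.val + 1) * t j ≤ ∑ i, (i.val + 1) * t i :=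
  Finset.single_le_sum (f := fun i : Fin N => (i.val + 1) * t i) (fun _ _ => Nat.zero_le _)
    (Finset.mem_univ j)

theorem bellD_ne {k : Type*} [Field k] (q : k) (n N : ℕ)
    (hq : ∀ m : ℕ, 1 ≤ m → m ≤ n → qInt q m ≠ 0) (t : Fin N → ℕ)
    (ht : (∑ i, (i.val + 1) * t i) ≤ n) : bellD q N t ≠ 0 := by
  refine Finset.prod_ne_zero_iff.mpr fun j _ => ?_
  have h := (le_weight N t j).trans ht
  rcases Nat.eq_zero_or_pos (t j) with h0 | h0
  · simp [h0, qFact]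
  · refine mul_ne_zero (pow_ne_zero _ (qFact_ne q _ fun i h1 h2 => hq i h1 ?_))
      (qFact_ne _ _ fun i h1 h2 h3 => hq ((j.val+1) * i) ?_ ?_ ?_)
    · nlinarith
    · nlinarith
    · exact (Nat.mul_le_mul_left _ h2).trans h
    · rw [qInt_mul, h3, mul_zero]

/-- shift bijection -/
theorem bell_shift {A : Type*} [AddCommMonoid A] (N a b : ℕ) (j : Fin N) (h : j.val + 1 ≤ a)
    (g : (Fin N → ℕ) → A) :
    ∑ t ∈ bellS N (a - 1 - j.val) b, g (fun i => t i + if i = j then 1 else 0) =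
      ∑ s ∈ (bellS N a (b + 1)).filter (fun s => s j ≠ 0), g s := by
  refine Finset.sum_nbij' (fun t i => t i + if i = j then 1 else 0)
    (fun s i => s i - if i = j then 1 else 0) ?_ ?_ ?_ ?_ ?_
  · intro t ht
    rw [mem_bellS] at ht
    rw [Finset.mem_filter, mem_bellS, sum_add_single', sum_add_single]
    refine ⟨⟨by omega, by omega⟩, by simp⟩
  · intro s hs
    rw [Finset.mem_filter, mem_bellS] at hs
    have e : s = fun i => (s i - if i = j then 1 else 0) + if i = j then 1 else 0 := by
      funext i
      split_ifs with hi
      · subst hi; omega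
      · rfl
    obtain ⟨⟨h1, h2⟩, h3⟩ := hs
    rw [e, sum_add_single'] at h1
    rw [e, sum_add_single] at h2
    rw [mem_bellS]
    constructor <;> omega
  · intro t _
    funext i; simp
  · intro s hs
    rw [Finset.mem_filter] at hs
    funext i
    dsimp only
    split_ifs with hi
    · subst hi; omega
    · rfl
  · intros; rfl

theorem bell_main {k A : Type*} [Field k] [Ring A] [Algebra k A]
    (q : k) (n : ℕ)
    (hq : ∀ m : ℕ, 1 ≤ m → m ≤ n → qInt q m ≠ 0)
    (d : ℕ → A)
    (hd : ∀ u v : ℕ, 1 ≤ u → u < v → d v * d u = q ^ v • (d u * d v))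
    (B : ℕ → ℕ → A)
    (hB00 : B 0 0 = 1)
    (hB0 : ∀ a : ℕ, 0 < a → B a 0 = 0)
    (hBrec : ∀ a b : ℕ, 1 ≤ b → b ≤ a →
      B a b = ∑ ℓ ∈ Finset.Icc (b - 1) (a - 1),
        qBinom q (a - 1) ℓ • (B ℓ (b - 1) * d (a - ℓ)))
    (N b a : ℕ) (hab : b ≤ a) (hN : a + 1 ≤ N + b) (han : a ≤ n) :
    B a b = ∑ t ∈ bellS N a b, (qFact q a / bellD q N t) •
      (List.ofFn fun i : Fin N => d (i.val + 1) ^ t i).prod := by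
  induction b generalizing a with
  | zero =>
    have hz : ∀ t : Fin N → ℕ, (∑ i, t i) = 0 → t = 0 := by
      intro t ht; funext i; simpa using (Finset.sum_eq_zero_iff.mp ht) i (Finset.mem_univ i)
    rcases Nat.eq_zero_or_pos a with rfl | ha
    · have : bellS N 0 0 = {0} := by
        ext t
        rw [mem_bellS, Finset.mem_singleton]
        exact ⟨fun h => hz t h.1, fun h => by simp [h]⟩
      rw [this, hB00]
      simp [bellD, qFact]
    · have : bellS N a 0 = ∅ := by
        refine Finset.eq_empty_of_forall_notMem fun t ht => ?_
        rw [mem_bellS] at ht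
        have := hz t ht.1
        subst this
        simp at ht
        omega
      rw [this, hB0 a ha]; simp
  | succ b ih =>
    rw [hBrec a (b+1) (by omega) hab, Nat.add_sub_cancel]
    -- coefficient as function of j, s
    have key : ∀ s ∈ bellS N a (b+1), qFact q a / bellD q N s =
        ∑ j : Fin N, qFact q (a-1) * (q ^ (∑ v, if j < v then (v.val+1) * s v else 0) *
          qInt q ((j.val+1) * s j)) / bellD q N s := by
      intro s hs
      rw [mem_bellS] at hs
      rw [← Finset.sum_div, ← Finset.mul_sum, qInt_sum q N (fun j => (j.val+1) * s j), hs.2]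
      congr 1
      obtain ⟨a, rfl⟩ : ∃ c, a = c + 1 := ⟨a - 1, by omega⟩
      rfl
    have R : ∑ t ∈ bellS N a (b+1), (qFact q a / bellD q N t) •
        (List.ofFn fun i : Fin N => d (i.val + 1) ^ t i).prod =
        ∑ j : Fin N, ∑ s ∈ (bellS N a (b+1)).filter (fun s => s j ≠ 0),
          (qFact q (a-1) * (q ^ (∑ v, if j < v then (v.val+1) * s v else 0) *
          qInt q ((j.val+1) * s j)) / bellD q N s) •
          (List.ofFn fun i : Fin N => d (i.val + 1) ^ s i).prod := by
      rw [Finset.sum_congr rfl fun s hs => by rw [key s hs, Finset.sum_smul], Finset.sum_comm]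
      refine Finset.sum_congr rfl fun j _ => ?_
      rw [Finset.sum_filter_of_ne]
      intro s _ h h0
      apply h
      simp [h0, qInt]
    rw [R]
    rw [← Finset.sum_filter_of_ne (s := Finset.univ) (p := fun j : Fin N => j.val + 1 + b ≤ a)]
    swap
    · intro j _ hne
      obtain ⟨s, hs, -⟩ := Finset.exists_ne_zero_of_sum_ne_zero hne
      rw [Finset.mem_filter, mem_bellS] at hs
      obtain ⟨⟨h1, h2⟩, h3⟩ := hs
      rw [← Finset.add_sum_erase _ _ (Finset.mem_univ j)] at h1 h2
      have : ∑ i ∈ Finset.univ.erase j, s i ≤ ∑ i ∈ Finset.univ.erase j, (i.val+1) * s i :=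
        Finset.sum_le_sum fun i _ => by nlinarith
      have h4 : 1 ≤ s j := by omega
      have : j.val + s j ≤ (j.val+1) * s j := by nlinarith
      omega
    symm
    refine Finset.sum_bij (fun j _ => a - 1 - j.val) ?_ ?_ ?_ ?_
    · intro j hj
      rw [Finset.mem_filter] at hj
      rw [Finset.mem_Icc]; omega
    · intro i hi j hj h
      rw [Finset.mem_filter] at hi hj
      apply Fin.ext; omega
    · intro l hl
      rw [Finset.mem_Icc] at hl
      refine ⟨⟨a - 1 - l, by omega⟩, ?_, ?_⟩
      · rw [Finset.mem_filter]
        refine ⟨Finset.mem_univ _, ?_⟩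
        show a - 1 - l + 1 + b ≤ a
        omega
      · show a - 1 - (a - 1 - l) = l
        omega
    · intro j hj
      rw [Finset.mem_filter] at hj
      have hj := hj.2
      rw [← bell_shift N a b j (by omega), ih (a - 1 - j.val) (by omega) (by omega) (by omega),
        Finset.sum_mul, Finset.smul_sum]
      refine Finset.sum_congr rfl fun t ht => ?_
      rw [mem_bellS] at ht
      have e : a - (a - 1 - j.val) = j.val + 1 := by omega
      rw [e, smul_mul_assoc, monom_mul q d hd, smul_smul, smul_smul]
      congr 1
      have e2 : (∑ v, if j < v then (v.val+1) * (t v + if v = j then 1 else 0) else 0) =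
          ∑ v, if j < v then (v.val+1) * t v else 0 := by
        refine Finset.sum_congr rfl fun v _ => ?_
        split_ifs with h1 h2
        · subst h2; exact absurd h1 (lt_irrefl _)
        · rfl
        · rfl
      have hw := sum_add_single N t (fun i => i.val + 1) j
      have hne := bellD_ne q n N hq (fun i => t i + if i = j then 1 else 0) (by
        rw [hw, ht.2]; omega)
      rw [e2]
      rw [bellD_add] at hne ⊢
      have hb := qBinom_fact q (a-1) (a-1-j.val) j.val (by omega)
      rw [← hb, qInt_mul]
      have e3 : qFact q (j.val+1) = qFact q j.val * qInt q (j.val+1) := rfl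
      simp only [if_true]
      rw [e3] at hne ⊢
      have n1 := left_ne_zero_of_mul hne
      have n2 := right_ne_zero_of_mul hne
      have n3 := left_ne_zero_of_mul n2
      have n4 := right_ne_zero_of_mul n2
      have n5 := left_ne_zero_of_mul n3
      have n6 := right_ne_zero_of_mul n3
      field_simp

/-- The q-commutative Bell differential polynomials (Theorem
`thm:q-comm-Bell-diff-poly`): if `d_v d_u = q^v d_u d_v` for `u < v`, then the
partial q-Bell polynomials `B_{n,k}` built from the `d_i` have the explicit
q-multinomial form. -/
theorem stmt_14 {k A : Type*} [Field k] [Ring A] [Algebra k A]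
    (q : k) (n : ℕ) (hn : 1 ≤ n)
    (hq : ∀ m : ℕ, 1 ≤ m → m ≤ n → qInt q m ≠ 0)
    (d : ℕ → A)
    (hd : ∀ u v : ℕ, 1 ≤ u → u < v → d v * d u = q ^ v • (d u * d v))
    (B : ℕ → ℕ → A)
    (hB00 : B 0 0 = 1)
    (hB0 : ∀ a : ℕ, 0 < a → B a 0 = 0)
    (hBgt : ∀ a b : ℕ, a < b → B a b = 0)
    (hBrec : ∀ a b : ℕ, 1 ≤ b → b ≤ a →
      B a b = ∑ ℓ ∈ Finset.Icc (b - 1) (a - 1),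
        qBinom q (a - 1) ℓ • (B ℓ (b - 1) * d (a - ℓ)))
    (K : ℕ) (hK1 : 1 ≤ K) (hK2 : K ≤ n) :
    B n K =
      ∑ᶠ t ∈ {t : Fin (n - K + 1) → ℕ |
          (∑ i, t i) = K ∧ (∑ i, (i.val + 1) * t i) = n},
        (qFact q n /
            ∏ i : Fin (n - K + 1),
              (qFact q (i.val + 1) ^ t i * qFact (q ^ (i.val + 1)) (t i))) •
          (List.ofFn fun i : Fin (n - K + 1) => d (i.val + 1) ^ t i).prod := by
  rw [bell_main q n hq d hd B hB00 hB0 hBrec (n - K + 1) K n hK2 (by omega) le_rfl]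
  rw [← finsum_mem_coe_finset]
  refine finsum_mem_congr ?_ fun _ _ => rfl
  ext t
  rw [Finset.mem_coe, mem_bellS]
  rfl
end

section
/- Let A be a unital associative algebra over a field of characteristic zero (equivalently, a unital ℚ-algebra) and x, y, h ∈ A with x·y = y·x + h, x·h = h·x and h·y = y·h. Then for every d ≥ 0, (x+y)^d = Σ ((d! / (a!·2^b·b!·c!)) · y^{a}·h^{b}·x^{c}), the sum being over all (a, b, c) ∈ ℕ³ with a + 2b + c = d. -/
namespace HW

/-- Index set of triples with `a + 2b + c = d`. -/
def S (d : ℕ) : Finset (ℕ × ℕ × ℕ) :=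
  (Finset.range (d + 1) ×ˢ Finset.range (d + 1) ×ˢ Finset.range (d + 1)).filter
    (fun p => p.1 + 2 * p.2.1 + p.2.2 = d)

theorem mem_S {d : ℕ} {p : ℕ × ℕ × ℕ} : p ∈ S d ↔ p.1 + 2 * p.2.1 + p.2.2 = d := by
  simp only [S, Finset.mem_filter, Finset.mem_product, Finset.mem_range]
  omega

/-- Normalised coefficient. -/
def q (a b c : ℕ) : ℚ :=
  1 / ((a.factorial : ℚ) * 2 ^ b * (b.factorial : ℚ) * (c.factorial : ℚ))

theorem q_a (a b c : ℕ) : q a b c = (a + 1 : ℚ) * q (a + 1) b c := by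
  have h1 : (a.factorial : ℚ) ≠ 0 := by positivity
  have h2 : (a + 1 : ℚ) ≠ 0 := by positivity
  simp only [q, Nat.factorial_succ]
  push_cast
  field_simp

theorem q_c (a b c : ℕ) : q a b c = (c + 1 : ℚ) * q a b (c + 1) := by
  have h2 : (c + 1 : ℚ) ≠ 0 := by positivity
  simp only [q, Nat.factorial_succ]
  push_cast
  field_simp

theorem q_b (a b c : ℕ) : (a + 1 : ℚ) * q (a + 1) b c = (2 * (b + 1) : ℚ) * q a (b + 1) c := by
  have h2 : (b + 1 : ℚ) ≠ 0 := by positivity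
  have h3 : (a + 1 : ℚ) ≠ 0 := by positivity
  simp only [q, Nat.factorial_succ]
  push_cast
  field_simp
  ring

variable {A : Type*} [Ring A] [Algebra ℚ A]

/-- Normalised monomial. -/
def T (x y h : A) (p : ℕ × ℕ × ℕ) : A :=
  q p.1 p.2.1 p.2.2 • (y ^ p.1 * h ^ p.2.1 * x ^ p.2.2)

theorem x_pow (x y h : A) (hxy : x * y = y * x + h) (hhy : h * y = y * h) (a : ℕ) :
    x * y ^ (a + 1) = y ^ (a + 1) * x + (a + 1 : ℚ) • (y ^ a * h) := by
  induction a with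
  | zero => simp [hxy]
  | succ a ih =>
    rw [pow_succ, ← mul_assoc, ih, add_mul, mul_assoc _ x y, hxy, smul_mul_assoc,
      mul_assoc _ h y, hhy, ← mul_assoc _ y h, ← pow_succ, mul_add, ← mul_assoc, add_assoc]
    congr 1
    push_cast
    module

theorem y_T (x y h : A) (a b c : ℕ) :
    y * T x y h (a, b, c) = (a + 1 : ℚ) • T x y h (a + 1, b, c) := by
  simp only [T]
  rw [smul_smul, ← q_a, mul_smul_comm, pow_succ']
  simp only [mul_assoc]

theorem x_mon (x h : A) (hxh : x * h = h * x) (b c : ℕ) :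
    x * (h ^ b * x ^ c) = h ^ b * x ^ (c + 1) := by
  have : x * h ^ b = h ^ b * x := (Commute.pow_right (show Commute x h from hxh) b)
  rw [← mul_assoc, this, mul_assoc, ← pow_succ']

theorem x_T_zero (x y h : A) (hxh : x * h = h * x) (b c : ℕ) :
    x * T x y h (0, b, c) = (c + 1 : ℚ) • T x y h (0, b, c + 1) := by
  simp only [T]
  rw [smul_smul, ← q_c, mul_smul_comm, pow_zero, one_mul, x_mon x h hxh]

theorem x_T_succ (x y h : A) (hxy : x * y = y * x + h) (hxh : x * h = h * x)
    (hhy : h * y = y * h) (a b c : ℕ) :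
    x * T x y h (a + 1, b, c) = (c + 1 : ℚ) • T x y h (a + 1, b, c + 1)
      + (2 * (b + 1) : ℚ) • T x y h (a, b + 1, c) := by
  simp only [T]
  rw [smul_smul, ← q_c, smul_smul, ← q_b, mul_smul_comm, mul_assoc (y ^ (a + 1)), ← mul_assoc x,
    x_pow x y h hxy hhy, add_mul, mul_assoc _ x, x_mon x h hxh, smul_mul_assoc, smul_add, smul_smul,
    mul_comm (q _ _ _), mul_assoc (y ^ a) h, ← mul_assoc h, ← pow_succ']
  simp only [mul_assoc]

theorem step (x y h : A) (hxy : x * y = y * x + h) (hxh : x * h = h * x)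
    (hhy : h * y = y * h) (d : ℕ) :
    (x + y) * ∑ p ∈ S d, T x y h p = (d + 1 : ℚ) • ∑ p ∈ S (d + 1), T x y h p := by
  have e1 : ∑ p ∈ S d, (p.1 + 1 : ℚ) • T x y h (p.1 + 1, p.2.1, p.2.2)
      = ∑ p ∈ S (d + 1), (p.1 : ℚ) • T x y h p := by
    rw [← Finset.sum_filter_of_ne (s := S (d + 1)) (p := fun p => p.1 ≠ 0)
      (by rintro p - hp h0; simp [h0] at hp)]
    refine Finset.sum_nbij' (fun p => (p.1 + 1, p.2.1, p.2.2)) (fun p => (p.1 - 1, p.2.1, p.2.2))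
      ?_ ?_ ?_ ?_ ?_
    · rintro ⟨a, b, c⟩ hp; simp [mem_S] at hp ⊢; omega
    · rintro ⟨a, b, c⟩ hp; simp [mem_S] at hp ⊢; omega
    · rintro ⟨a, b, c⟩ hp; simp
    · rintro ⟨a, b, c⟩ hp; simp [mem_S] at hp ⊢; omega
    · rintro ⟨a, b, c⟩ hp; simp
  have e2 : ∑ p ∈ S d, (p.2.2 + 1 : ℚ) • T x y h (p.1, p.2.1, p.2.2 + 1)
      = ∑ p ∈ S (d + 1), (p.2.2 : ℚ) • T x y h p := by
    rw [← Finset.sum_filter_of_ne (s := S (d + 1)) (p := fun p => p.2.2 ≠ 0)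
      (by rintro p - hp h0; simp [h0] at hp)]
    refine Finset.sum_nbij' (fun p => (p.1, p.2.1, p.2.2 + 1)) (fun p => (p.1, p.2.1, p.2.2 - 1))
      ?_ ?_ ?_ ?_ ?_
    · rintro ⟨a, b, c⟩ hp; simp [mem_S] at hp ⊢; omega
    · rintro ⟨a, b, c⟩ hp; simp [mem_S] at hp ⊢; omega
    · rintro ⟨a, b, c⟩ hp; simp
    · rintro ⟨a, b, c⟩ hp; simp [mem_S] at hp ⊢; omega
    · rintro ⟨a, b, c⟩ hp; simp
  have e3 : ∑ p ∈ S d, (if p.1 ≠ 0 then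
        (2 * (p.2.1 + 1) : ℚ) • T x y h (p.1 - 1, p.2.1 + 1, p.2.2) else 0)
      = ∑ p ∈ S (d + 1), (2 * p.2.1 : ℚ) • T x y h p := by
    rw [← Finset.sum_filter, ← Finset.sum_filter_of_ne (s := S (d + 1)) (p := fun p => p.2.1 ≠ 0)
      (by rintro p - hp h0; simp [h0] at hp)]
    refine Finset.sum_nbij' (fun p => (p.1 - 1, p.2.1 + 1, p.2.2))
      (fun p => (p.1 + 1, p.2.1 - 1, p.2.2)) ?_ ?_ ?_ ?_ ?_
    · rintro ⟨a, b, c⟩ hp; simp [mem_S] at hp ⊢; omega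
    · rintro ⟨a, b, c⟩ hp; simp [mem_S] at hp ⊢; omega
    · rintro ⟨a, b, c⟩ hp; simp [mem_S] at hp ⊢; omega
    · rintro ⟨a, b, c⟩ hp; simp [mem_S] at hp ⊢; omega
    · rintro ⟨a, b, c⟩ hp; simp
  have e4 : ∀ p : ℕ × ℕ × ℕ, (x + y) * T x y h p =
      (p.1 + 1 : ℚ) • T x y h (p.1 + 1, p.2.1, p.2.2)
      + (p.2.2 + 1 : ℚ) • T x y h (p.1, p.2.1, p.2.2 + 1)
      + (if p.1 ≠ 0 then
        (2 * (p.2.1 + 1) : ℚ) • T x y h (p.1 - 1, p.2.1 + 1, p.2.2) else 0) := by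
    rintro ⟨a, b, c⟩
    rw [add_mul, y_T]
    rcases a with _ | a
    · rw [x_T_zero x y h hxh]; simp [add_comm]
    · rw [x_T_succ x y h hxy hxh hhy]
      simp only [ne_eq, Nat.add_eq_zero_iff, one_ne_zero, and_false, not_false_eq_true, if_true,
        Nat.add_sub_cancel]
      abel
  rw [Finset.mul_sum, Finset.sum_congr rfl (fun p _ => e4 p), Finset.sum_add_distrib,
    Finset.sum_add_distrib, e1, e2, e3, ← Finset.sum_add_distrib, ← Finset.sum_add_distrib,
    Finset.smul_sum]
  refine Finset.sum_congr rfl fun p hp => ?_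
  have hd : (p.1 + 2 * p.2.1 + p.2.2 : ℚ) = d + 1 := by exact_mod_cast mem_S.1 hp
  rw [← hd]
  module

theorem main (x y h : A) (hxy : x * y = y * x + h) (hxh : x * h = h * x)
    (hhy : h * y = y * h) (d : ℕ) :
    (x + y) ^ d = (d.factorial : ℚ) • ∑ p ∈ S d, T x y h p := by
  induction d with
  | zero =>
    have : S 0 = {(0, 0, 0)} := by
      ext ⟨a, b, c⟩
      simp [mem_S]
      omega
    simp [this, T, q]
  | succ d ih =>
    rw [pow_succ', ih, mul_smul_comm, step x y h hxy hxh hhy, smul_smul, Nat.factorial_succ]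
    push_cast
    rw [mul_comm]

end HW

/-- Binomial formula in the Heisenberg–Weyl situation over a field of
characteristic zero (i.e. a unital ℚ-algebra): if `x·y = y·x + h` with `h`
commuting with `x` and `y`, then
`(x+y)^d = Σ_{a+2b+c=d} d!/(a!·2^b·b!·c!) · y^a h^b x^c`. -/
theorem stmt_17 {A : Type*} [Ring A] [Algebra ℚ A] (x y h : A)
    (hxy : x * y = y * x + h) (hxh : x * h = h * x) (hhy : h * y = y * h)
    (d : ℕ) :
    (x + y) ^ d =
      ∑ᶠ p ∈ {p : ℕ × ℕ × ℕ | p.1 + 2 * p.2.1 + p.2.2 = d},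
        ((d.factorial : ℚ) /
            ((p.1.factorial : ℚ) * 2 ^ p.2.1 * (p.2.1.factorial : ℚ) *
              (p.2.2.factorial : ℚ))) •
          (y ^ p.1 * h ^ p.2.1 * x ^ p.2.2) := by
  have hS : {p : ℕ × ℕ × ℕ | p.1 + 2 * p.2.1 + p.2.2 = d} = (HW.S d : Set (ℕ × ℕ × ℕ)) := by
    ext p
    simp [HW.mem_S]
  rw [hS, finsum_mem_coe_finset, HW.main x y h hxy hxh hhy, Finset.smul_sum]
  refine Finset.sum_congr rfl fun p _ => ?_
  rw [HW.T, smul_smul, HW.q, mul_one_div]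
end

section
/- Let A be a unital associative ring and g, h ∈ A. Set a_k := g·h^k for k ≥ 0. Then for all m, n ≥ 0, g·SH_{m,n}(h,g) = Σ a_{i₀}·a_{i₁}⋯a_{iₙ}, where the sum is over all (i₀, i₁, …, iₙ) ∈ ℕ^{n+1} with i₀ + i₁ + ⋯ + iₙ = m. -/
/-- The shuffle type polynomials `SH_{i,j}(u,v)`: the sum of all products of `i`
copies of `u` and `j` copies of `v`. -/
def SH {A : Type*} [Ring A] (u v : A) : ℕ → ℕ → A
  | 0, 0 => 1
  | i + 1, 0 => u * SH u v i 0
  | 0, j + 1 => v * SH u v 0 j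
  | i + 1, j + 1 => u * SH u v i (j + 1) + v * SH u v (i + 1) j

theorem SH_right_zero {A : Type*} [Ring A] (u v : A) (m : ℕ) : SH u v m 0 = u ^ m := by
  induction m with
  | zero => simp [SH]
  | succ m ih => rw [SH, ih, pow_succ']

theorem SH_right_succ {A : Type*} [Ring A] (u v : A) (m n : ℕ) :
    SH u v m (n + 1) =
      ∑ p ∈ Finset.HasAntidiagonal.antidiagonal m, u ^ p.1 * (v * SH u v p.2 n) := by
  induction m with
  | zero => simp [SH]
  | succ m ih =>
    rw [SH, ih, Finset.Nat.sum_antidiagonal_succ, Finset.mul_sum, add_comm]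
    simp [pow_succ', mul_assoc]

theorem sum_antidiagonalTuple_succ_aux {A : Type*} [Ring A] (k m : ℕ)
    (f : (Fin (k + 1) → ℕ) → A) :
    ∑ i ∈ Finset.Nat.antidiagonalTuple (k + 1) m, f i =
      ∑ p ∈ Finset.HasAntidiagonal.antidiagonal m, ∑ t ∈ Finset.Nat.antidiagonalTuple k p.2,
        f (Fin.cons p.1 t) := by
  rw [Finset.sum_sigma']
  symm
  refine Finset.sum_bij' (fun x _ => (Fin.cons x.1.1 x.2 : Fin (k + 1) → ℕ))
    (fun i _ => ⟨(i 0, ∑ j : Fin k, i j.succ), Fin.tail i⟩) ?_ ?_ ?_ ?_ ?_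
  · rintro ⟨⟨a, b⟩, t⟩ hx
    simp only [Finset.mem_sigma, Finset.HasAntidiagonal.mem_antidiagonal,
      Finset.Nat.mem_antidiagonalTuple] at hx ⊢
    simp [Fin.sum_univ_succ, hx.2, hx.1]
  · intro i hi
    simp only [Finset.mem_sigma, Finset.HasAntidiagonal.mem_antidiagonal,
      Finset.Nat.mem_antidiagonalTuple, Fin.sum_univ_succ] at hi ⊢
    exact ⟨hi, rfl⟩
  · rintro ⟨⟨a, b⟩, t⟩ hx
    simp only [Finset.mem_sigma, Finset.HasAntidiagonal.mem_antidiagonal,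
      Finset.Nat.mem_antidiagonalTuple] at hx
    simp [hx.2]
  · intro i hi
    simp
  · intro x hx
    rfl

/-- Relation with the noncommutative Faà di Bruno polynomials: with
`a_k := g·h^k`, one has `g·SH_{m,n}(h,g) = Σ_{i₀+⋯+iₙ=m} a_{i₀} a_{i₁} ⋯ a_{iₙ}`. -/
theorem stmt_18 {A : Type*} [Ring A] (g h : A) (m n : ℕ) :
    g * SH h g m n =
      ∑ i ∈ Finset.Nat.antidiagonalTuple (n + 1) m,
        (List.ofFn fun j : Fin (n + 1) => g * h ^ i j).prod := by
  induction n generalizing m with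
  | zero => simp [SH_right_zero]
  | succ n ih =>
    rw [SH_right_succ, sum_antidiagonalTuple_succ_aux, Finset.mul_sum]
    refine Finset.sum_congr rfl fun p _ => ?_
    rw [ih, ← mul_assoc, Finset.mul_sum]
    refine Finset.sum_congr rfl fun t _ => ?_
    rw [List.ofFn_succ (n := n + 1), List.prod_cons]
    simp only [Fin.cons_zero, Fin.cons_succ]
end
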